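/- arXiv:1205.5134 — 11 statements merged into one kernel-verified Lean document; each statement's English description precedes it below -/
import Mathlib

section
/- Let K be a field, n ≥ 1, and let σ, τ be ring automorphisms of K such that σ∘τ = τ∘σ, σⁿ = id, and τ² = id. Let γ, θ ∈ K satisfy σ(γ) = γ, τ(γ) = γ, σ(θ) = θ and τ(θ) = θ. Then the set A = {α_θ(X,Y) : X, Y ∈ D} is a subring of the 2n×2n matrix ring over K: it contains 0 and the identity matrix and is closed under addition, negation and multiplication; moreover the multiplication rule α_θ(X,Y)·α_θ(U,V) = α_θ(XU + θ·τ(Y)V, YU + τ(X)V) holds for all X, Y, U, V ∈ M_n(K). -/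
open Matrix

noncomputable section

/-- The matrix `Γ` of the left-regular representation of the generator `e` of the
cyclic algebra `(K/F, σ, γ)`: the `(i+1, i)` entries are `1`, the `(0, n-1)` entry is `γ`. -/
def Gam (n : ℕ) {K : Type} [Field K] (γ : K) : Matrix (Fin n) (Fin n) K :=
  Matrix.of fun i j =>
    if (i : ℕ) = (j : ℕ) + 1 then (1 : K)
    else if (i : ℕ) = 0 ∧ (j : ℕ) = n - 1 then γ else 0

/-- The image `D` of the cyclic algebra `(K/F, σ, γ)` under its left-regular representation:
matrices `∑ k, diag(c_k, σ(c_k), …, σ^{n-1}(c_k)) * Γ^k`. -/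
def cyclicRep (n : ℕ) {K : Type} [Field K] (σ : RingAut K) (γ : K) :
    Set (Matrix (Fin n) (Fin n) K) :=
  {M | ∃ c : Fin n → K,
    M = ∑ k : Fin n, Matrix.diagonal (fun i : Fin n => (σ ^ (i : ℕ)) (c k)) * (Gam n γ) ^ (k : ℕ)}

/-- The iterated construction `α_θ(X, Y) = [[X, θ·τ(Y)], [Y, τ(X)]]`. -/
def alphaTheta (n : ℕ) {K : Type} [Field K] (θ : K) (τ : RingAut K)
    (X Y : Matrix (Fin n) (Fin n) K) :
    Matrix (Fin n ⊕ Fin n) (Fin n ⊕ Fin n) K :=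
  Matrix.fromBlocks X (θ • Y.map ⇑τ) Y (X.map ⇑τ)

/-- The iterated code `A = {α_θ(X,Y) : X, Y ∈ D}`. -/
def iterCode (n : ℕ) {K : Type} [Field K] (σ τ : RingAut K) (γ θ : K) :
    Set (Matrix (Fin n ⊕ Fin n) (Fin n ⊕ Fin n) K) :=
  {M | ∃ X ∈ cyclicRep n σ γ, ∃ Y ∈ cyclicRep n σ γ, M = alphaTheta n θ τ X Y}

/-! Write `Δ c = diag(c, σ c, …, σⁿ⁻¹ c)`. Because of the relations `Γ Δ(σ c) = Δ(c) Γ` (which comes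
down to `σⁿ = 1` at the corner entry) and `Γⁿ = γ • 1 = Δ γ`, a product of two monomials `Δ a * Γᵏ`
is again a monomial, whose exponent can be reduced below `n`; hence `D` is a ring. As `θ • 1 = Δ θ`,
and `τ` fixes `Γ` and sends `Δ c` to `Δ (τ c)`, the ring `D` is stable under `θ • ·` and under `τ`.
For any ring of matrices with these two stability properties, the multiplication rule for `α_θ`
shows that the matrices `α_θ(X, Y)` form a ring. -/

section TwistedDiagonal

variable {n : ℕ} {R : Type*} [Semiring R] {σ : RingAut R}

/-- The ring homomorphism `c ↦ diag(c, σ c, …, σⁿ⁻¹ c)` from the scalars to the `n × n` matrices: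
the left-regular representation of the cyclic algebra restricted to its coefficients. -/
def twistedDiagonal (n : ℕ) (σ : RingAut R) : R →+* Matrix (Fin n) (Fin n) R :=
  (diagonalRingHom (Fin n) R).comp
    (RingHom.pi fun i : Fin n => ((σ ^ (i : ℕ) : RingAut R) : R →+* R))

theorem twistedDiagonal_apply (n : ℕ) (σ : RingAut R) (c : R) :
    twistedDiagonal n σ c = diagonal fun i : Fin n => (σ ^ (i : ℕ)) c :=
  rfl

theorem twistedDiagonal_of_fixed {c : R} (hc : σ c = c) :
    twistedDiagonal n σ c = c • (1 : Matrix (Fin n) (Fin n) R) := by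
  simp only [twistedDiagonal_apply, RingAut.coe_pow, Function.iterate_fixed hc,
    smul_one_eq_diagonal]

theorem mapMatrix_twistedDiagonal {τ : RingAut R} (hστ : Commute σ τ) (c : R) :
    (τ : R →+* R).mapMatrix (twistedDiagonal n σ c) = twistedDiagonal n σ (τ c) := by
  have hpow (k : ℕ) : τ ((σ ^ k) c) = (σ ^ k) (τ c) :=
    (DFunLike.congr_fun (hστ.pow_left k) c).symm
  simp only [twistedDiagonal_apply, RingHom.mapMatrix_apply, RingHom.coe_coe,
    diagonal_map (map_zero τ), hpow]

end TwistedDiagonal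

section Gam

variable {n : ℕ} {K : Type} [Field K]

theorem mapMatrix_Gam {L : Type} [Field L] (f : K →+* L) (γ : K) :
    f.mapMatrix (Gam n γ) = Gam n (f γ) := by
  ext i j
  simp [Gam, apply_ite f]

theorem Gam_mulVec_single_of_lt (γ : K) {j : ℕ} (hj : j + 1 < n) :
    Gam n γ *ᵥ Pi.single ⟨j, by omega⟩ 1 = Pi.single ⟨j + 1, hj⟩ 1 := by
  ext i
  have hlast : j ≠ n - 1 := by omega
  simp [Gam, Pi.single_apply, Fin.ext_iff, hlast]

theorem Gam_mulVec_single_last (γ : K) {j : ℕ} (hj : j + 1 = n) :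
    Gam n γ *ᵥ Pi.single ⟨j, by omega⟩ 1 = γ • Pi.single ⟨0, by omega⟩ 1 := by
  ext i
  have hlast : j = n - 1 := by omega
  have hi : (i : ℕ) ≠ j + 1 := by omega
  simp [Gam, Pi.single_apply, Fin.ext_iff, ← hlast, hi]

theorem Gam_pow_mulVec_single_zero (γ : K) {k : ℕ} (hk : k < n) :
    Gam n γ ^ k *ᵥ Pi.single ⟨0, by omega⟩ 1 = Pi.single ⟨k, hk⟩ 1 := by
  induction k with
  | zero => rw [pow_zero, one_mulVec]
  | succ k ih =>
    rw [pow_succ', ← mulVec_mulVec, ih (by omega), Gam_mulVec_single_of_lt]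

-- The first basis vector is cyclic for `Γ`, so it suffices to evaluate `Γⁿ` there.
theorem Gam_pow_self (γ : K) : Gam n γ ^ n = γ • (1 : Matrix (Fin n) (Fin n) K) := by
  refine ext_of_mulVec_single fun j => ?_
  have hzero : Gam n γ ^ n *ᵥ Pi.single ⟨0, j.pos⟩ 1 = γ • Pi.single ⟨0, j.pos⟩ 1 := by
    obtain ⟨m, rfl⟩ : ∃ m, n = m + 1 := ⟨n - 1, by have := j.pos; omega⟩
    rw [pow_succ', ← mulVec_mulVec, Gam_pow_mulVec_single_zero γ m.lt_succ_self,
      Gam_mulVec_single_last γ rfl]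
  calc Gam n γ ^ n *ᵥ Pi.single j 1
      = Gam n γ ^ n *ᵥ (Gam n γ ^ (j : ℕ) *ᵥ Pi.single ⟨0, j.pos⟩ 1) := by
        rw [Gam_pow_mulVec_single_zero γ j.isLt]
    _ = Gam n γ ^ (j : ℕ) *ᵥ (Gam n γ ^ n *ᵥ Pi.single ⟨0, j.pos⟩ 1) := by
        rw [mulVec_mulVec, mulVec_mulVec, pow_mul_comm]
    _ = γ • Pi.single j 1 := by
        rw [hzero, mulVec_smul, Gam_pow_mulVec_single_zero γ j.isLt]
    _ = (γ • (1 : Matrix (Fin n) (Fin n) K)) *ᵥ Pi.single j 1 := by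
        rw [smul_mulVec, one_mulVec]

theorem semiconjBy_Gam_twistedDiagonal {σ : RingAut K} (hσn : σ ^ n = 1) (γ c : K) :
    SemiconjBy (Gam n γ) (twistedDiagonal n σ (σ c)) (twistedDiagonal n σ c) := by
  ext i j
  have hshift : (σ ^ (j : ℕ)) (σ c) = (σ ^ ((j : ℕ) + 1)) c := by
    rw [pow_succ, RingAut.mul_apply]
  rw [twistedDiagonal_apply, twistedDiagonal_apply, mul_diagonal, diagonal_mul, hshift]
  simp only [Gam, of_apply]
  split_ifs with hsub hcorner
  · rw [hsub, one_mul, mul_one]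
  · have hj : (j : ℕ) + 1 = n := by omega
    rw [hj, hσn, hcorner.1, pow_zero, mul_comm]
  · rw [zero_mul, mul_zero]

theorem semiconjBy_Gam_pow_twistedDiagonal {σ : RingAut K} (hσn : σ ^ n = 1) (γ : K) (k : ℕ)
    (c : K) :
    SemiconjBy (Gam n γ ^ k) (twistedDiagonal n σ ((σ ^ k) c)) (twistedDiagonal n σ c) := by
  induction k generalizing c with
  | zero => simp
  | succ k ih =>
    rw [pow_succ, pow_succ', RingAut.mul_apply]
    exact (ih c).mul_left (semiconjBy_Gam_twistedDiagonal hσn γ _)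

theorem twistedDiagonal_mul_Gam_pow_mul {σ : RingAut K} (hσn : σ ^ n = 1) (γ a b : K)
    (k l : ℕ) :
    twistedDiagonal n σ a * Gam n γ ^ k * (twistedDiagonal n σ b * Gam n γ ^ l) =
      twistedDiagonal n σ (a * (σ ^ k)⁻¹ b) * Gam n γ ^ (k + l) := by
  have hcomm := (semiconjBy_Gam_pow_twistedDiagonal hσn γ k ((σ ^ k)⁻¹ b)).eq
  rw [← RingAut.mul_apply, mul_inv_cancel, RingAut.one_apply] at hcomm
  rw [mul_assoc, ← mul_assoc (Gam n γ ^ k), hcomm, map_mul, pow_add]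
  simp only [mul_assoc]

end Gam

section CyclicRep

variable {n : ℕ} {K : Type} [Field K] {σ τ : RingAut K} {γ : K}

/-- The coefficient map `c ↦ ∑ k, diag(c_k, σ(c_k), …, σⁿ⁻¹(c_k)) * Γᵏ`, whose range is
`cyclicRep n σ γ`. -/
def cyclicRepHom (n : ℕ) (σ : RingAut K) (γ : K) :
    (Fin n → K) →+ Matrix (Fin n) (Fin n) K where
  toFun c := ∑ k, twistedDiagonal n σ (c k) * Gam n γ ^ (k : ℕ)
  map_zero' := by simp
  map_add' c d := by simp [add_mul, Finset.sum_add_distrib]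

theorem cyclicRepHom_apply (n : ℕ) (σ : RingAut K) (γ : K) (c : Fin n → K) :
    cyclicRepHom n σ γ c = ∑ k, twistedDiagonal n σ (c k) * Gam n γ ^ (k : ℕ) :=
  rfl

theorem cyclicRep_eq_range (n : ℕ) (σ : RingAut K) (γ : K) :
    cyclicRep n σ γ = (cyclicRepHom n σ γ).range :=
  Set.ext fun _ => exists_congr fun _ => eq_comm

theorem twistedDiagonal_mul_Gam_pow_mem_range (hσγ : σ γ = γ) (c : K) (m : ℕ) :
    twistedDiagonal n σ c * Gam n γ ^ m ∈ (cyclicRepHom n σ γ).range := by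
  obtain rfl | hn := n.eq_zero_or_pos
  · rw [Subsingleton.elim (_ * _) 0]
    exact zero_mem _
  induction m using Nat.strong_induction_on generalizing c with
  | _ m ih =>
    by_cases hm : m < n
    · refine ⟨Pi.single ⟨m, hm⟩ c, ?_⟩
      rw [cyclicRepHom_apply, Fintype.sum_eq_single ⟨m, hm⟩]
      · rw [Pi.single_eq_same]
      · intro k hk
        rw [Pi.single_eq_of_ne hk, map_zero, zero_mul]
    · have hreduce : twistedDiagonal n σ c * Gam n γ ^ m =
          twistedDiagonal n σ (c * γ) * Gam n γ ^ (m - n) := by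
        rw [map_mul, twistedDiagonal_of_fixed hσγ, ← Gam_pow_self, mul_assoc, ← pow_add,
          Nat.add_sub_cancel' (not_lt.mp hm)]
      rw [hreduce]
      exact ih (m - n) (by omega) (c * γ)

theorem one_mem_cyclicRep (hσγ : σ γ = γ) : 1 ∈ cyclicRep n σ γ := by
  rw [cyclicRep_eq_range]
  simpa using twistedDiagonal_mul_Gam_pow_mem_range (n := n) hσγ 1 0

theorem mul_mem_cyclicRep (hσn : σ ^ n = 1) (hσγ : σ γ = γ) {M N : Matrix (Fin n) (Fin n) K}
    (hM : M ∈ cyclicRep n σ γ) (hN : N ∈ cyclicRep n σ γ) : M * N ∈ cyclicRep n σ γ := by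
  rw [cyclicRep_eq_range] at hM hN ⊢
  obtain ⟨c, rfl⟩ := hM
  obtain ⟨d, rfl⟩ := hN
  rw [cyclicRepHom_apply, cyclicRepHom_apply, Finset.sum_mul_sum]
  refine sum_mem fun k _ => sum_mem fun l _ => ?_
  rw [twistedDiagonal_mul_Gam_pow_mul hσn]
  exact twistedDiagonal_mul_Gam_pow_mem_range hσγ _ _

/-- The image `cyclicRep n σ γ` of the cyclic algebra, as a subring of the matrix ring. -/
def cyclicRepSubring (hσn : σ ^ n = 1) (hσγ : σ γ = γ) : Subring (Matrix (Fin n) (Fin n) K) where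
  __ := (cyclicRepHom n σ γ).range.copy (cyclicRep n σ γ) (cyclicRep_eq_range n σ γ)
  one_mem' := one_mem_cyclicRep hσγ
  mul_mem' := mul_mem_cyclicRep hσn hσγ

theorem smul_mem_cyclicRep {θ : K} (hσθ : σ θ = θ) {M : Matrix (Fin n) (Fin n) K}
    (hM : M ∈ cyclicRep n σ γ) : θ • M ∈ cyclicRep n σ γ := by
  rw [cyclicRep_eq_range] at hM ⊢
  obtain ⟨c, rfl⟩ := hM
  refine ⟨θ • c, ?_⟩
  simp [cyclicRepHom_apply, twistedDiagonal_of_fixed hσθ, Finset.smul_sum]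

theorem map_mem_cyclicRep (hστ : Commute σ τ) (hτγ : τ γ = γ) {M : Matrix (Fin n) (Fin n) K}
    (hM : M ∈ cyclicRep n σ γ) : M.map τ ∈ cyclicRep n σ γ := by
  rw [cyclicRep_eq_range] at hM ⊢
  obtain ⟨c, rfl⟩ := hM
  refine ⟨τ ∘ c, ?_⟩
  change _ = (τ : K →+* K).mapMatrix _
  simp [-RingHom.mapMatrix_apply, cyclicRepHom_apply, mapMatrix_twistedDiagonal hστ,
    mapMatrix_Gam, hτγ]

end CyclicRep

section AlphaTheta

variable {n : ℕ} {K : Type} [Field K] {θ : K} {τ : RingAut K}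

theorem alphaTheta_zero (θ : K) (τ : RingAut K) : alphaTheta n θ τ 0 0 = 0 := by
  simp [alphaTheta]

theorem alphaTheta_one (θ : K) (τ : RingAut K) : alphaTheta n θ τ 1 0 = 1 := by
  simp [alphaTheta]

theorem alphaTheta_add (θ : K) (τ : RingAut K) (X Y U V : Matrix (Fin n) (Fin n) K) :
    alphaTheta n θ τ X Y + alphaTheta n θ τ U V = alphaTheta n θ τ (X + U) (Y + V) := by
  simp [alphaTheta, fromBlocks_add, Matrix.map_add]

theorem alphaTheta_neg (θ : K) (τ : RingAut K) (X Y : Matrix (Fin n) (Fin n) K) :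
    -alphaTheta n θ τ X Y = alphaTheta n θ τ (-X) (-Y) := by
  simp [alphaTheta, fromBlocks_neg, Matrix.map_neg]

theorem alphaTheta_mul (hτ2 : τ ^ 2 = 1) (hτθ : τ θ = θ)
    (X Y U V : Matrix (Fin n) (Fin n) K) :
    alphaTheta n θ τ X Y * alphaTheta n θ τ U V =
      alphaTheta n θ τ (X * U + θ • (Y.map τ * V)) (Y * U + X.map τ * V) := by
  have hττ : τ ∘ τ = id := by
    rw [← RingAut.coe_one, ← hτ2, RingAut.coe_pow, Function.iterate_succ, Function.iterate_one]
  have hsmul (A : Matrix (Fin n) (Fin n) K) : (θ • A).map τ = θ • A.map τ := by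
    rw [Matrix.map_smul' _ _ _ (map_mul τ), hτθ]
  simp only [alphaTheta, fromBlocks_multiply, Matrix.map_mul, Matrix.map_add τ (map_add τ),
    hsmul, Matrix.map_map, hττ, Matrix.map_id, Matrix.smul_mul, Matrix.mul_smul, smul_add]
  congr 1 <;> exact add_comm _ _

/-- The subring of block matrices `α_θ(X, Y)` with `X` and `Y` in a subring `S` of matrices that is
stable under `θ • ·` and under the entrywise action of `τ`. -/
def alphaThetaSubring (hτ2 : τ ^ 2 = 1) (hτθ : τ θ = θ) (S : Subring (Matrix (Fin n) (Fin n) K))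
    (hθS : ∀ X ∈ S, θ • X ∈ S) (hτS : ∀ X ∈ S, X.map τ ∈ S) :
    Subring (Matrix (Fin n ⊕ Fin n) (Fin n ⊕ Fin n) K) where
  carrier := {M | ∃ X ∈ S, ∃ Y ∈ S, M = alphaTheta n θ τ X Y}
  zero_mem' := ⟨0, S.zero_mem, 0, S.zero_mem, (alphaTheta_zero θ τ).symm⟩
  one_mem' := ⟨1, S.one_mem, 0, S.zero_mem, (alphaTheta_one θ τ).symm⟩
  add_mem' := by
    rintro _ _ ⟨X, hX, Y, hY, rfl⟩ ⟨U, hU, V, hV, rfl⟩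
    exact ⟨X + U, S.add_mem hX hU, Y + V, S.add_mem hY hV, alphaTheta_add θ τ X Y U V⟩
  neg_mem' := by
    rintro _ ⟨X, hX, Y, hY, rfl⟩
    exact ⟨-X, S.neg_mem hX, -Y, S.neg_mem hY, alphaTheta_neg θ τ X Y⟩
  mul_mem' := by
    rintro _ _ ⟨X, hX, Y, hY, rfl⟩ ⟨U, hU, V, hV, rfl⟩
    exact ⟨_, S.add_mem (S.mul_mem hX hU) (hθS _ (S.mul_mem (hτS Y hY) hV)),
      _, S.add_mem (S.mul_mem hY hU) (S.mul_mem (hτS X hX) hV), alphaTheta_mul hτ2 hτθ X Y U V⟩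

end AlphaTheta

/-- under the stated assumptions on `σ, τ, γ, θ`, the set
`A = {α_θ(X,Y) : X, Y ∈ D}` is a subring of the `2n × 2n` matrix ring over `K`
(contains `0` and `1`, closed under `+`, `-`, `*`), and the multiplication rule
`α_θ(X,Y)·α_θ(U,V) = α_θ(XU + θ·τ(Y)V, YU + τ(X)V)` holds for all `X Y U V ∈ Mₙ(K)`. -/
theorem stmt0 {K : Type} [Field K] (n : ℕ) (hn : 1 ≤ n) (σ τ : RingAut K)
    (hcomm : σ * τ = τ * σ) (hσn : σ ^ n = 1) (hτ2 : τ ^ 2 = 1)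
    (γ θ : K) (hσγ : σ γ = γ) (hτγ : τ γ = γ) (hσθ : σ θ = θ) (hτθ : τ θ = θ) :
    (0 : Matrix (Fin n ⊕ Fin n) (Fin n ⊕ Fin n) K) ∈ iterCode n σ τ γ θ ∧
    (1 : Matrix (Fin n ⊕ Fin n) (Fin n ⊕ Fin n) K) ∈ iterCode n σ τ γ θ ∧
    (∀ M ∈ iterCode n σ τ γ θ, ∀ N ∈ iterCode n σ τ γ θ, M + N ∈ iterCode n σ τ γ θ) ∧
    (∀ M ∈ iterCode n σ τ γ θ, -M ∈ iterCode n σ τ γ θ) ∧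
    (∀ M ∈ iterCode n σ τ γ θ, ∀ N ∈ iterCode n σ τ γ θ, M * N ∈ iterCode n σ τ γ θ) ∧
    (∀ X Y U V : Matrix (Fin n) (Fin n) K,
      alphaTheta n θ τ X Y * alphaTheta n θ τ U V =
        alphaTheta n θ τ (X * U + θ • (Y.map ⇑τ * V)) (Y * U + X.map ⇑τ * V)) := by
  let A : Subring (Matrix (Fin n ⊕ Fin n) (Fin n ⊕ Fin n) K) :=
    alphaThetaSubring hτ2 hτθ (cyclicRepSubring hσn hσγ)
      (fun _ => smul_mem_cyclicRep hσθ) (fun _ => map_mem_cyclicRep hcomm hτγ)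
  exact ⟨A.zero_mem, A.one_mem, fun _ hM _ hN => A.add_mem hM hN, fun _ hM => A.neg_mem hM,
    fun _ hM _ hN => A.mul_mem hM hN, alphaTheta_mul hτ2 hτθ⟩
end
end

section
/- Let K be a field, n ≥ 1, and let σ, τ be ring automorphisms of K such that σ∘τ = τ∘σ, σⁿ = id, and τ² = id. Let γ, θ ∈ K with γ ≠ 0, σ(γ) = γ, τ(γ) = γ, σ(θ) = θ and τ(θ) = θ. Assume that every nonzero element of D is an invertible matrix, and that Z·τ(Z) ≠ θ·Iₙ for every Z ∈ D. Then for all X, Y ∈ D the determinant of α_θ(X,Y) is fixed by both σ and τ: σ(det α_θ(X,Y)) = det α_θ(X,Y) and τ(det α_θ(X,Y)) = det α_θ(X,Y). (In other words, the determinant of every codeword lies in the subfield F^⟨τ⟩ of the fixed field F of σ.) -/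
open Matrix

noncomputable section

/-!
In the cyclic algebra `e σ(x) = x e`, so `Γ σ(M) = M Γ` for every `M ∈ D`. As `τ` commutes with `σ`
and fixes `Γ`, it follows that `diag(Γ, Γ)` intertwines `σ(α_θ(X, Y))` with `α_θ(X, Y)`. Likewise
`α_θ(0, 1)` intertwines `τ(α_θ(X, Y))` with `α_θ(X, Y)`. Taking determinants and cancelling that of
the intertwining matrix gives the claim. Only for `θ = 0` is `α_θ(0, 1)` singular; the codeword is
then block triangular, with determinant `det X * τ (det X)`.
-/

theorem map_det_eq_of_semiconjBy {ι R F : Type*} [Fintype ι] [DecidableEq ι] [CommRing R]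
    [FunLike F R R] [RingHomClass F R R] (f : F) {G M : Matrix ι ι R}
    (hG : IsLeftRegular G.det) (h : SemiconjBy G (M.map f) M) : f M.det = M.det := by
  have map_det : f M.det = (M.map f).det := RingHom.map_det (f : R →+* R) M
  refine hG ?_
  calc
    G.det * f M.det = (G * M.map f).det := by rw [map_det, det_mul]
    _ = (M * G).det := by rw [h.eq]
    _ = G.det * M.det := by rw [det_mul, mul_comm]

theorem semiconjBy_fromBlocks_zero_zero {m n R : Type*} [Fintype m] [Fintype n]
    [NonUnitalNonAssocSemiring R] {G : Matrix m m R} {H : Matrix n n R}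
    {A A' : Matrix m m R} {B B' : Matrix m n R} {C C' : Matrix n m R} {D D' : Matrix n n R}
    (hA : SemiconjBy G A A') (hB : G * B = B' * H) (hC : H * C = C' * G)
    (hD : SemiconjBy H D D') :
    SemiconjBy (fromBlocks G 0 0 H) (fromBlocks A B C D) (fromBlocks A' B' C' D') := by
  simp [SemiconjBy, fromBlocks_multiply, hA.eq, hB, hC, hD.eq]

section CyclicAlgebra

variable {K : Type} [Field K]

theorem Gam_succ_eq_submatrix (n : ℕ) (γ : K) :
    Gam (n + 1) γ = (diagonal (Pi.mulSingle 0 γ)).submatrix id (finRotate (n + 1)) := by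
  ext i j
  have hi := i.is_lt
  have hj := j.is_lt
  simp only [Gam, of_apply, submatrix_apply, id, diagonal_apply, Pi.mulSingle_apply, Fin.ext_iff,
    coe_finRotate, Fin.val_zero, Fin.val_last]
  split_ifs <;> first | rfl | omega

theorem det_Gam_succ (n : ℕ) (γ : K) : (Gam (n + 1) γ).det = (-1) ^ n * γ := by
  rw [Gam_succ_eq_submatrix, det_permute', det_diagonal, Finset.prod_pi_mulSingle', sign_finRotate]
  simp

theorem det_Gam_ne_zero (n : ℕ) {γ : K} (hγ : γ ≠ 0) : (Gam n γ).det ≠ 0 := by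
  cases n with
  | zero => simp
  | succ n => simp [det_Gam_succ, hγ]

theorem map_Gam {L F : Type} [Field L] [FunLike F K L] [RingHomClass F K L] (f : F) (n : ℕ)
    (γ : K) : (Gam n γ).map f = Gam n (f γ) := by
  ext i j
  simp only [Gam, map_apply, of_apply, apply_ite f, map_one, map_zero]

variable {n : ℕ} {σ : RingAut K} {γ : K}

theorem semiconjBy_Gam_diagonal (hσn : σ ^ n = 1) (c : K) :
    SemiconjBy (Gam n γ) ((diagonal fun i : Fin n => (σ ^ (i : ℕ)) c).map σ)
      (diagonal fun i : Fin n => (σ ^ (i : ℕ)) c) := by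
  ext i j
  have σ_pow_succ : σ ((σ ^ (j : ℕ)) c) = (σ ^ (j + 1 : ℕ)) c := by rw [pow_succ']; rfl
  rw [diagonal_map (map_zero σ), mul_diagonal, diagonal_mul, σ_pow_succ]
  simp only [Gam, of_apply]
  split_ifs with subdiagonal corner
  · rw [subdiagonal, mul_comm]
  · have last : (j : ℕ) + 1 = n := by omega
    rw [last, hσn, corner.1, pow_zero, mul_comm]
  · rw [zero_mul, mul_zero]

theorem semiconjBy_Gam_of_mem_cyclicRep (hσn : σ ^ n = 1) (hσγ : σ γ = γ)
    {M : Matrix (Fin n) (Fin n) K} (hM : M ∈ cyclicRep n σ γ) :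
    SemiconjBy (Gam n γ) (M.map σ) M := by
  obtain ⟨c, rfl⟩ := hM
  have summand (k : Fin n) : SemiconjBy (Gam n γ)
      ((diagonal (fun i : Fin n => (σ ^ (i : ℕ)) (c k)) * Gam n γ ^ (k : ℕ)).map σ)
      (diagonal (fun i : Fin n => (σ ^ (i : ℕ)) (c k)) * Gam n γ ^ (k : ℕ)) := by
    have map_pow_Gam : (Gam n γ ^ (k : ℕ)).map σ = Gam n γ ^ (k : ℕ) := by
      rw [← RingEquiv.mapMatrix_apply, map_pow, RingEquiv.mapMatrix_apply, map_Gam, hσγ]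
    rw [Matrix.map_mul, map_pow_Gam]
    exact (semiconjBy_Gam_diagonal hσn (c k)).mul_right (Commute.self_pow _ _)
  rw [← RingEquiv.mapMatrix_apply, map_sum, SemiconjBy, Finset.mul_sum, Finset.sum_mul]
  exact Finset.sum_congr rfl fun k _ => (summand k).eq

end CyclicAlgebra

section IteratedConstruction

variable {K : Type} [Field K] {n : ℕ} {σ τ : RingAut K} {θ : K}

theorem map_alphaTheta (hcomm : Commute σ τ) (X Y : Matrix (Fin n) (Fin n) K) :
    (alphaTheta n θ τ X Y).map σ = alphaTheta n (σ θ) τ (X.map σ) (Y.map σ) := by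
  have σ_comp_τ : σ ∘ τ = τ ∘ σ := congrArg DFunLike.coe hcomm.eq
  simp only [alphaTheta, fromBlocks_map, map_smul' σ θ _ (map_mul σ), map_map, σ_comp_τ]

theorem semiconjBy_alphaTheta {G X X' Y Y' : Matrix (Fin n) (Fin n) K} (hG : G.map τ = G)
    (hX : SemiconjBy G X X') (hY : SemiconjBy G Y Y') :
    SemiconjBy (fromBlocks G 0 0 G) (alphaTheta n θ τ X Y) (alphaTheta n θ τ X' Y') := by
  have map_τ {Z Z' : Matrix (Fin n) (Fin n) K} (hZ : SemiconjBy G Z Z') :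
      SemiconjBy G (Z.map τ) (Z'.map τ) := by
    simpa only [RingEquiv.mapMatrix_apply, hG] using hZ.map τ.mapMatrix
  refine semiconjBy_fromBlocks_zero_zero hX ?_ hY.eq (map_τ hX)
  rw [Matrix.mul_smul, Matrix.smul_mul, (map_τ hY).eq]

theorem semiconjBy_alphaTheta_zero_one (hτ : Function.Involutive τ) (hτθ : τ θ = θ)
    (X Y : Matrix (Fin n) (Fin n) K) :
    SemiconjBy (alphaTheta n θ τ 0 1) ((alphaTheta n θ τ X Y).map τ) (alphaTheta n θ τ X Y) := by
  rw [map_alphaTheta (Commute.refl τ), hτθ]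
  simp [SemiconjBy, alphaTheta, fromBlocks_multiply, map_map, hτ.comp_self]

theorem alphaTheta_zero_one_mul_self :
    alphaTheta n θ τ 0 1 * alphaTheta n θ τ 0 1 = θ • 1 := by
  simp [alphaTheta, fromBlocks_multiply, ← fromBlocks_one, fromBlocks_smul]

theorem det_alphaTheta_zero_one_ne_zero (hθ : θ ≠ 0) : (alphaTheta n θ τ 0 1).det ≠ 0 := by
  refine left_ne_zero_of_mul (b := (alphaTheta n θ τ 0 1).det) ?_
  rw [← det_mul, alphaTheta_zero_one_mul_self, det_smul, det_one, mul_one]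
  exact pow_ne_zero _ hθ

theorem det_alphaTheta_theta_zero (X Y : Matrix (Fin n) (Fin n) K) :
    (alphaTheta n 0 τ X Y).det = X.det * τ X.det := by
  rw [alphaTheta, zero_smul, det_fromBlocks_zero₁₂, τ.map_det, RingEquiv.mapMatrix_apply]

theorem map_det_alphaTheta_self (hτ : Function.Involutive τ) (hτθ : τ θ = θ)
    (X Y : Matrix (Fin n) (Fin n) K) :
    τ (alphaTheta n θ τ X Y).det = (alphaTheta n θ τ X Y).det := by
  rcases eq_or_ne θ 0 with rfl | hθ
  · rw [det_alphaTheta_theta_zero, map_mul, hτ, mul_comm]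
  · exact map_det_eq_of_semiconjBy τ
      (IsRegular.of_ne_zero (det_alphaTheta_zero_one_ne_zero hθ)).left
      (semiconjBy_alphaTheta_zero_one hτ hτθ X Y)

theorem map_det_alphaTheta_of_semiconjBy (hcomm : Commute σ τ) (hσθ : σ θ = θ)
    {G X Y : Matrix (Fin n) (Fin n) K} (hGdet : G.det ≠ 0) (hG : G.map τ = G)
    (hX : SemiconjBy G (X.map σ) X) (hY : SemiconjBy G (Y.map σ) Y) :
    σ (alphaTheta n θ τ X Y).det = (alphaTheta n θ τ X Y).det := by
  have det_diag_ne_zero : (fromBlocks G 0 0 G).det ≠ 0 := by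
    rw [det_fromBlocks_zero₂₁]
    exact mul_ne_zero hGdet hGdet
  refine map_det_eq_of_semiconjBy σ (IsRegular.of_ne_zero det_diag_ne_zero).left ?_
  rw [map_alphaTheta hcomm, hσθ]
  exact semiconjBy_alphaTheta hG hX hY

end IteratedConstruction

theorem stmt2_general {K : Type} [Field K] (n : ℕ) (σ τ : RingAut K)
    (hcomm : σ * τ = τ * σ) (hσn : σ ^ n = 1) (hτ2 : τ ^ 2 = 1)
    (γ θ : K) (hγ : γ ≠ 0) (hσγ : σ γ = γ) (hτγ : τ γ = γ) (hσθ : σ θ = θ) (hτθ : τ θ = θ) :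
    ∀ X ∈ cyclicRep n σ γ, ∀ Y ∈ cyclicRep n σ γ,
      σ (alphaTheta n θ τ X Y).det = (alphaTheta n θ τ X Y).det ∧
      τ (alphaTheta n θ τ X Y).det = (alphaTheta n θ τ X Y).det := by
  intro X hX Y hY
  have τ_fixes_Gam : (Gam n γ).map τ = Gam n γ := by rw [map_Gam, hτγ]
  have τ_involutive : Function.Involutive τ :=
    DFunLike.congr_fun ((pow_two τ).symm.trans hτ2)
  exact ⟨map_det_alphaTheta_of_semiconjBy hcomm hσθ (det_Gam_ne_zero n hγ) τ_fixes_Gam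
      (semiconjBy_Gam_of_mem_cyclicRep hσn hσγ hX) (semiconjBy_Gam_of_mem_cyclicRep hσn hσγ hY),
    map_det_alphaTheta_self τ_involutive hτθ X Y⟩

/-- under the stated assumptions, the determinant of every codeword
`α_θ(X,Y)`, `X, Y ∈ D`, is fixed by both `σ` and `τ` (i.e. lies in `F^⟨τ⟩`). -/
theorem stmt2 {K : Type} [Field K] (n : ℕ) (hn : 1 ≤ n) (σ τ : RingAut K)
    (hcomm : σ * τ = τ * σ) (hσn : σ ^ n = 1) (hτ2 : τ ^ 2 = 1)
    (γ θ : K) (hγ : γ ≠ 0) (hσγ : σ γ = γ) (hτγ : τ γ = γ) (hσθ : σ θ = θ) (hτθ : τ θ = θ)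
    (hdiv : ∀ M ∈ cyclicRep n σ γ, M ≠ 0 → IsUnit M)
    (hnorm : ∀ Z ∈ cyclicRep n σ γ,
      Z * Z.map ⇑τ ≠ θ • (1 : Matrix (Fin n) (Fin n) K)) :
    ∀ X ∈ cyclicRep n σ γ, ∀ Y ∈ cyclicRep n σ γ,
      σ (alphaTheta n θ τ X Y).det = (alphaTheta n θ τ X Y).det ∧
      τ (alphaTheta n θ τ X Y).det = (alphaTheta n θ τ X Y).det :=
  stmt2_general n σ τ hcomm hσn hτ2 γ θ hγ hσγ hτγ hσθ hτθ
end
end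

section
/- Let g be a ring automorphism of ℂ that commutes with complex conjugation, and for a complex matrix M let g(M) denote entrywise application. Let θ' be a positive real number, s = √θ', and ζ ∈ ℂ with ζ⁴ = 1. For D ∈ M_n(ℂ) define the 2n×2n matrices B(D) = [[D, 0],[0, g(D)]] and C(D) = [[0, ζ·s·g(D)],[s·D, 0]]. If D_j, D_k ∈ M_n(ℂ) satisfy D_j·D_k* + D_k·D_j* = 0, where * denotes conjugate transpose, then B(D_j)·B(D_k)* + B(D_k)·B(D_j)* = 0 and C(D_j)·C(D_k)* + C(D_k)·C(D_j)* = 0. (Thus the iterated code inherits the orthogonality relations, hence the fast-decodability properties, of the underlying code.) -/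
open Matrix

noncomputable section

/-! The matrix `B(D)` is block diagonal with blocks `D` and `g(D)`, and both blocks inherit the
relation because `g` respects sums, products and conjugate transposes. Moreover `C(D) = Γ * B(D)`
with `Γ = [[0, ζ·s], [s, 0]]` independent of `D`, and left multiplication by a fixed matrix turns
`X * Y* + Y * X*` into `Γ * (X * Y* + Y * X*) * Γ*`. -/

variable {l m n o R S : Type*}

/-- The Hurwitz–Radon orthogonality relation `X * Y* + Y * X* = 0` between two weight matrices of a
space-time code, the source of its fast decodability. -/
def HurwitzRadonOrthogonal [Fintype n] [NonUnitalNonAssocSemiring R] [Star R]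
    (X Y : Matrix m n R) : Prop :=
  X * Yᴴ + Y * Xᴴ = 0

/-- The block-diagonal matrix `B(D)` of the iterated code construction, in which `g` is the
automorphism twisting the second block. -/
def twistedDiag [Zero R] (g : R → R) (D : Matrix m n R) : Matrix (m ⊕ m) (n ⊕ n) R :=
  fromBlocks D 0 0 (D.map g)

/-- The block-antidiagonal matrix `C(D)` of the iterated code construction, with arbitrary scalars
`a` and `b` in place of the paper's `ζ·s` and `s`. -/
def twistedAntidiag [MulZeroClass R] (g : R → R) (a b : R) (D : Matrix m n R) :
    Matrix (m ⊕ m) (n ⊕ n) R :=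
  fromBlocks 0 (a • D.map g) (b • D) 0

theorem twistedAntidiag_eq_mul_twistedDiag [Fintype m] [DecidableEq m] [Semiring R]
    (g : R → R) (a b : R) (D : Matrix m n R) :
    twistedAntidiag g a b D =
      (fromBlocks 0 (a • 1) (b • 1) 0 : Matrix (m ⊕ m) (m ⊕ m) R) * twistedDiag g D := by
  simp [twistedAntidiag, twistedDiag, fromBlocks_multiply]

namespace HurwitzRadonOrthogonal

theorem map [Fintype n] [NonUnitalNonAssocSemiring R] [Star R] [NonUnitalNonAssocSemiring S]
    [Star S] {X Y : Matrix m n R} (h : HurwitzRadonOrthogonal X Y) (f : R →⋆ₙ+* S) :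
    HurwitzRadonOrthogonal (X.map f) (Y.map f) :=
  calc X.map f * (Y.map f)ᴴ + Y.map f * (X.map f)ᴴ
      = (X * Yᴴ + Y * Xᴴ).map f := by
        simp only [Matrix.map_add f (map_add f), Matrix.map_mul, conjTranspose_map f (map_star f)]
    _ = 0 := by rw [h, Matrix.map_zero f (map_zero f)]

theorem mul_left [Fintype m] [Fintype n] [NonUnitalSemiring R] [StarRing R]
    {X Y : Matrix m n R} (h : HurwitzRadonOrthogonal X Y) (P : Matrix l m R) :
    HurwitzRadonOrthogonal (P * X) (P * Y) :=
  calc P * X * (P * Y)ᴴ + P * Y * (P * X)ᴴ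
      = P * (X * Yᴴ + Y * Xᴴ) * Pᴴ := by
        simp only [conjTranspose_mul, Matrix.mul_add, Matrix.add_mul, Matrix.mul_assoc]
    _ = 0 := by rw [h, Matrix.mul_zero, Matrix.zero_mul]

theorem fromBlocks_diagonal [Fintype n] [Fintype o] [NonUnitalNonAssocSemiring R] [StarRing R]
    {X Y : Matrix m n R} {Z W : Matrix l o R}
    (hXY : HurwitzRadonOrthogonal X Y) (hZW : HurwitzRadonOrthogonal Z W) :
    HurwitzRadonOrthogonal (fromBlocks X 0 0 Z) (fromBlocks Y 0 0 W) :=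
  calc fromBlocks X 0 0 Z * (fromBlocks Y 0 0 W)ᴴ + fromBlocks Y 0 0 W * (fromBlocks X 0 0 Z)ᴴ
      = fromBlocks (X * Yᴴ + Y * Xᴴ) 0 0 (Z * Wᴴ + W * Zᴴ) := by
        simp [fromBlocks_conjTranspose, fromBlocks_multiply, fromBlocks_add]
    _ = 0 := by rw [hXY, hZW, fromBlocks_zero]

protected theorem twistedDiag [Fintype n] [NonUnitalNonAssocSemiring R] [StarRing R]
    {X Y : Matrix m n R} (h : HurwitzRadonOrthogonal X Y) (g : R →⋆ₙ+* R) :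
    HurwitzRadonOrthogonal (twistedDiag g X) (twistedDiag g Y) :=
  h.fromBlocks_diagonal (h.map g)

protected theorem twistedAntidiag [Finite m] [Fintype n] [Semiring R] [StarRing R]
    {X Y : Matrix m n R} (h : HurwitzRadonOrthogonal X Y) (g : R →⋆ₙ+* R) (a b : R) :
    HurwitzRadonOrthogonal (twistedAntidiag g a b X) (twistedAntidiag g a b Y) := by
  classical
  cases nonempty_fintype m
  simpa only [twistedAntidiag_eq_mul_twistedDiag] using (h.twistedDiag g).mul_left _

end HurwitzRadonOrthogonal

theorem stmt6_general [Finite m] [Fintype n] [Semiring R] [StarRing R] (g : R →⋆ₙ+* R) (a b : R)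
    {Dj Dk : Matrix m n R} (hD : HurwitzRadonOrthogonal Dj Dk) :
    HurwitzRadonOrthogonal (twistedDiag g Dj) (twistedDiag g Dk) ∧
      HurwitzRadonOrthogonal (twistedAntidiag g a b Dj) (twistedAntidiag g a b Dk) :=
  ⟨hD.twistedDiag g, hD.twistedAntidiag g a b⟩

/-- if `g` is a ring automorphism of `ℂ` commuting with complex conjugation,
`θ' > 0`, `s = √θ'`, `ζ⁴ = 1`, and `Dⱼ·Dₖ* + Dₖ·Dⱼ* = 0`, then the block matrices
`B(D) = [[D, 0], [0, g(D)]]` and `C(D) = [[0, ζ·s·g(D)], [s·D, 0]]` satisfy the same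
orthogonality relations: `B(Dⱼ)·B(Dₖ)* + B(Dₖ)·B(Dⱼ)* = 0` and
`C(Dⱼ)·C(Dₖ)* + C(Dₖ)·C(Dⱼ)* = 0`. Thus the iterated code inherits the orthogonality
relations (hence the fast-decodability properties) of the underlying code. -/
theorem stmt6 (n : ℕ) (g : RingAut ℂ)
    (hg : ∀ z : ℂ, g (starRingEnd ℂ z) = starRingEnd ℂ (g z))
    (θ' : ℝ) (hθ' : 0 < θ') (s : ℝ) (hs : s = Real.sqrt θ')
    (ζ : ℂ) (hζ : ζ ^ 4 = 1)
    (B C : Matrix (Fin n) (Fin n) ℂ → Matrix (Fin n ⊕ Fin n) (Fin n ⊕ Fin n) ℂ)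
    (hB : ∀ D : Matrix (Fin n) (Fin n) ℂ, B D = Matrix.fromBlocks D 0 0 (D.map ⇑g))
    (hC : ∀ D : Matrix (Fin n) (Fin n) ℂ,
      C D = Matrix.fromBlocks 0 ((ζ * (s : ℂ)) • D.map ⇑g) (((s : ℂ)) • D) 0)
    (Dj Dk : Matrix (Fin n) (Fin n) ℂ)
    (hD : Dj * Dkᴴ + Dk * Djᴴ = 0) :
    B Dj * (B Dk)ᴴ + B Dk * (B Dj)ᴴ = 0 ∧
    C Dj * (C Dk)ᴴ + C Dk * (C Dj)ᴴ = 0 := by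
  rw [hB, hB, hC, hC]
  exact stmt6_general { (g : ℂ →ₙ+* ℂ) with map_star' := hg } (ζ * s) s hD
end
end

section
/- Let F be a field of characteristic different from 2, let a ∈ F not be a square in F, and let γ, θ ∈ F with γ ≠ 0. Then the following are equivalent: (i) for every z ∈ ℍ[F,a,γ], z·σ(z) ≠ θ; (ii) both of the following hold: (1) for all u₀, u₁, v₁ ∈ F, θ ≠ u₀² − a·u₁² + γ·a·v₁², and (2) for all w₀, w₁ ∈ F with w₀·w₁ = 0, θ ≠ γ·(w₀² + a·w₁²). (Condition (1) says θ is not a determinant det[[u, γσ(v)],[v, σ(u)]] with u ∈ K = F(√a) and v ∈ √a·F; condition (2) says θ ≢ γ modulo squares of K^×.) -/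
/-!
Write `z = u + v j` with `u = x₀ + x₁ i` and `v = x₂ + x₃ i`. Since `j` anticommutes with `i`,
`z σ(z) = N(u) + γ v² + Tr(v) u j`, with `N` and `Tr` the norm and trace of `F[i]` over `F`.
For this to be a scalar, either `Tr(v) = 2 x₂` vanishes, and then `v = x₃ i` gives
`z σ(z) = N(u) + γ a x₃²`, or else `u = 0` and `γ v²` is a scalar, which for `Tr(v) ≠ 0`
forces `γ x₃ = 0`, so that `z σ(z) = γ x₂²`.
-/

open Quaternion

noncomputable section

/-- The automorphism `σ` of the quaternion algebra `ℍ[F, a, γ]` given by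
`σ(x₀ + x₁i + x₂j + x₃k) = x₀ − x₁i + x₂j − x₃k` (the extension to the quaternions of the
nontrivial automorphism of the maximal subfield `K = F(√a) = F ⊕ Fi`). -/
def qsigma {F : Type} [Field F] (a γ : F) (z : ℍ[F, a, γ]) : ℍ[F, a, γ] :=
  ⟨z.re, -z.imI, z.imJ, -z.imK⟩

section CommRing

variable {R : Type*} [CommRing R]

/-- The automorphism `σ` of `qsigma` over an arbitrary commutative ring of coefficients. When `γ`
is a unit it is conjugation by `j`. -/
def conjByJ (a γ : R) (z : ℍ[R,a,γ]) : ℍ[R,a,γ] :=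
  ⟨z.re, -z.imI, z.imJ, -z.imK⟩

theorem mul_conjByJ (a γ : R) (z : ℍ[R,a,γ]) :
    z * conjByJ a γ z =
      ⟨z.re ^ 2 - a * z.imI ^ 2 + γ * (z.imJ ^ 2 + a * z.imK ^ 2),
        2 * (γ * z.imK * z.imJ), 2 * (z.re * z.imJ), 2 * (z.imI * z.imJ)⟩ := by
  ext <;>
    simp only [conjByJ, QuaternionAlgebra.re_mul, QuaternionAlgebra.imI_mul,
      QuaternionAlgebra.imJ_mul, QuaternionAlgebra.imK_mul] <;>
    ring

variable [NoZeroDivisors R]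

theorem mul_conjByJ_eq_coe_iff (h2 : (2 : R) ≠ 0) (a γ θ : R) (z : ℍ[R,a,γ]) :
    z * conjByJ a γ z = (θ : ℍ[R,a,γ]) ↔
      z.re ^ 2 - a * z.imI ^ 2 + γ * (z.imJ ^ 2 + a * z.imK ^ 2) = θ ∧
        (z.imJ = 0 ∨ γ * z.imK = 0 ∧ z.re = 0 ∧ z.imI = 0) := by
  simp only [mul_conjByJ, QuaternionAlgebra.ext_iff, QuaternionAlgebra.re_coe,
    QuaternionAlgebra.imI_coe, QuaternionAlgebra.imJ_coe, QuaternionAlgebra.imK_coe,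
    mul_eq_zero, h2, false_or]
  tauto

theorem exists_mul_conjByJ_eq_coe_iff (h2 : (2 : R) ≠ 0) (a γ θ : R) :
    (∃ z : ℍ[R,a,γ], z * conjByJ a γ z = (θ : ℍ[R,a,γ])) ↔
      (∃ u₀ u₁ v₁ : R, θ = u₀ ^ 2 - a * u₁ ^ 2 + γ * a * v₁ ^ 2) ∨ ∃ w : R, θ = γ * w ^ 2 := by
  simp only [mul_conjByJ_eq_coe_iff h2]
  constructor
  · rintro ⟨z, hθ, hJ | ⟨hK, hre, hI⟩⟩
    · left
      exact ⟨z.re, z.imI, z.imK, by rw [← hθ, hJ]; ring⟩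
    · right
      refine ⟨z.imJ, ?_⟩
      rw [hre, hI] at hθ
      linear_combination a * z.imK * hK - hθ
  · rintro (⟨u₀, u₁, v₁, hθ⟩ | ⟨w, hθ⟩)
    · exact ⟨⟨u₀, u₁, 0, v₁⟩, by rw [hθ]; ring, .inl rfl⟩
    · exact ⟨⟨0, 0, w, 0⟩, by rw [hθ]; ring, .inr ⟨mul_zero γ, rfl, rfl⟩⟩

theorem stmt7_general (h2 : (2 : R) ≠ 0) (a γ θ : R) :
    (∀ z : ℍ[R,a,γ], z * conjByJ a γ z ≠ (θ : ℍ[R,a,γ])) ↔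
      ((∀ u₀ u₁ v₁ : R, θ ≠ u₀ ^ 2 - a * u₁ ^ 2 + γ * a * v₁ ^ 2) ∧
        (∀ w₀ w₁ : R, w₀ * w₁ = 0 → θ ≠ γ * (w₀ ^ 2 + a * w₁ ^ 2))) := by
  rw [← not_exists, exists_mul_conjByJ_eq_coe_iff h2]
  push Not
  refine and_congr_right fun hdet => ⟨fun hsq w₀ w₁ hw hθ => ?_, fun hsq w hθ => ?_⟩
  · rcases mul_eq_zero.mp hw with rfl | rfl
    · exact hdet 0 0 w₁ (by rw [hθ]; ring)
    · exact hsq w₀ (by rw [hθ]; ring)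
  · exact hsq w 0 (mul_zero w) (by rw [hθ]; ring)

end CommRing

/-- for `F` of characteristic `≠ 2`, `a` a non-square, `γ ≠ 0`:
`θ ≠ z·σ(z)` for all quaternions `z` iff (1) `θ` is not a determinant
`u₀² − a·u₁² + γ·a·v₁²` and (2) `θ ≢ γ` modulo squares of `K^×`, i.e.
`θ ≠ γ·(w₀² + a·w₁²)` whenever `w₀·w₁ = 0`. -/
theorem stmt7 {F : Type} [Field F] (hchar : (2 : F) ≠ 0)
    (a : F) (ha : ¬ IsSquare a) (γ θ : F) (hγ : γ ≠ 0) :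
    (∀ z : ℍ[F, a, γ], z * qsigma a γ z ≠ (θ : ℍ[F, a, γ])) ↔
      ((∀ u₀ u₁ v₁ : F, θ ≠ u₀ ^ 2 - a * u₁ ^ 2 + γ * a * v₁ ^ 2) ∧
        (∀ w₀ w₁ : F, w₀ * w₁ = 0 → θ ≠ γ * (w₀ ^ 2 + a * w₁ ^ 2))) :=
  stmt7_general hchar a γ θ
end
end

section
/- Let F be a linearly ordered field (for instance a totally real number field with a fixed real embedding), and let a, γ, θ ∈ F with a < 0, γ < 0 and θ < 0. Suppose furthermore that for all w₀, w₁ ∈ F with w₀·w₁ = 0 one has θ ≠ γ·(w₀² + a·w₁²) (i.e., θ ≢ γ modulo squares of K^× for K = F(√a)). Then for every z ∈ ℍ[F,a,γ], z·σ(z) ≠ θ; consequently every nonzero element of the iterated code α_θ(Q,Q) has nonzero determinant. -/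
open Quaternion

noncomputable section

/-!
The automorphism `σ` is conjugation by `j`, that is, `j z = σ(z) j`. So `z σ(z) = θ` gives
`(z j)² = z σ(z) j² = γ θ`. By the quadratic equation of a quaternion, an element with scalar
square is either a scalar or pure. When `a` and `γ` are negative a pure quaternion has nonpositive
square, whereas `γ θ > 0`; hence `z j` is the scalar `γ x₂`, where `x₂` is the `j`-coordinate of
`z`, and `θ = γ x₂²`.
-/

section

open QuaternionAlgebra

variable {R : Type*} [CommRing R]

theorem eq_coe_re_or_star_eq_neg_of_sq_eq_coe [NoZeroDivisors R] {c₁ c₂ c₃ r : R}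
    {y : ℍ[R,c₁,c₂,c₃]} (h : y ^ 2 = r) : y = y.re ∨ star y = -y := by
  set t := 2 * y.re + c₂ * y.imI with ht
  have trace_smul_eq_coe : t • y = ((star y * y).re + r : R) := by
    rw [← coe_mul_eq_smul, ht, ← star_add_self', add_mul, ← sq, h, star_mul_eq_coe, re_coe,
      coe_add]
  rcases eq_or_ne t 0 with ht₀ | ht₀
  · right
    exact eq_neg_of_add_eq_zero_left (by rw [star_add_self', ← ht, ht₀, QuaternionAlgebra.coe_zero])
  · left
    have hI : t * y.imI = 0 := congrArg imI trace_smul_eq_coe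
    have hJ : t * y.imJ = 0 := congrArg imJ trace_smul_eq_coe
    have hK : t * y.imK = 0 := congrArg imK trace_smul_eq_coe
    simp only [mul_eq_zero, ht₀, false_or] at hI hJ hK
    ext <;> simp [hI, hJ, hK]

/-- The automorphism `σ` of `ℍ[R,a,γ]` over an arbitrary commutative ring, bundled as an
algebra equivalence; over a field its underlying function is `qsigma`. -/
def sigmaEquiv (a γ : R) : ℍ[R,a,γ] ≃ₐ[R] ℍ[R,a,γ] where
  toFun z := ⟨z.re, -z.imI, z.imJ, -z.imK⟩
  invFun z := ⟨z.re, -z.imI, z.imJ, -z.imK⟩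
  left_inv z := by simp
  right_inv z := by simp
  map_mul' x y := by ext <;> simp <;> ring
  map_add' x y := by ext <;> simp [add_comm]
  commutes' r := by ext <;> simp

theorem basis_j_mul_eq_sigmaEquiv_mul_basis_j {a γ : R} (z : ℍ[R,a,γ]) :
    (Basis.self R).j * z = sigmaEquiv a γ z * (Basis.self R).j := by
  ext <;> simp [sigmaEquiv, Basis.self]

theorem sq_mul_basis_j {a γ : R} (z : ℍ[R,a,γ]) :
    (z * (Basis.self R).j) ^ 2 = γ • (z * sigmaEquiv a γ z) := by
  rw [sq, mul_assoc, ← mul_assoc _ z, basis_j_mul_eq_sigmaEquiv_mul_basis_j, mul_assoc,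
    Basis.j_mul_j, mul_smul_comm, mul_smul_comm, mul_one]

variable [LinearOrder R] [IsStrictOrderedRing R] {a γ : R}

theorem re_sq_nonpos_of_re_eq_zero (ha : a ≤ 0) (hγ : γ ≤ 0) {y : ℍ[R,a,γ]} (hy : y.re = 0) :
    (y ^ 2).re ≤ 0 := by
  have re_sq : (y ^ 2).re = a * y.imI ^ 2 + γ * y.imJ ^ 2 - a * γ * y.imK ^ 2 := by
    simp only [sq, QuaternionAlgebra.re_mul, hy]
    ring
  have hI : a * y.imI ^ 2 ≤ 0 := mul_nonpos_of_nonpos_of_nonneg ha (sq_nonneg _)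
  have hJ : γ * y.imJ ^ 2 ≤ 0 := mul_nonpos_of_nonpos_of_nonneg hγ (sq_nonneg _)
  have hK : 0 ≤ a * γ * y.imK ^ 2 :=
    mul_nonneg (mul_nonneg_of_nonpos_of_nonpos ha hγ) (sq_nonneg _)
  linarith

theorem eq_coe_re_of_sq_eq_coe_of_pos (ha : a ≤ 0) (hγ : γ ≤ 0) {r : R} (hr : 0 < r)
    {y : ℍ[R,a,γ]} (h : y ^ 2 = r) : y = y.re := by
  refine (eq_coe_re_or_star_eq_neg_of_sq_eq_coe h).resolve_right fun hy => hr.not_ge ?_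
  simpa only [h, re_coe] using re_sq_nonpos_of_re_eq_zero ha hγ (star_eq_neg.mp hy)

theorem eq_mul_imJ_sq_of_mul_sigmaEquiv_eq_coe (ha : a ≤ 0) (hγ : γ < 0) {θ : R} (hθ : θ < 0)
    {z : ℍ[R,a,γ]} (hz : z * sigmaEquiv a γ z = θ) : θ = γ * z.imJ ^ 2 := by
  set y := z * (Basis.self R).j
  have sq_eq : y ^ 2 = (γ * θ : R) := by rw [sq_mul_basis_j, hz, smul_coe]
  have y_scalar : y = y.re :=
    eq_coe_re_of_sq_eq_coe_of_pos ha hγ.le (mul_pos_of_neg_of_neg hγ hθ) sq_eq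
  have re_eq : y.re = γ * z.imJ := by simp [y]
  have re_sq : (γ * z.imJ) ^ 2 = γ * θ := by
    rw [y_scalar, re_eq, ← coe_pow] at sq_eq
    exact coe_injective sq_eq
  refine mul_left_cancel₀ hγ.ne ?_
  linear_combination -re_sq

theorem stmt8_general (ha : a ≤ 0) (hγ : γ < 0) {θ : R} (hθ : θ < 0)
    (h : ∀ w : R, θ ≠ γ * w ^ 2) (z : ℍ[R,a,γ]) : z * sigmaEquiv a γ z ≠ θ :=
  fun hz => h z.imJ (eq_mul_imJ_sq_of_mul_sigmaEquiv_eq_coe ha hγ hθ hz)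

end

/-- over a linearly ordered field `F` with `a < 0`, `γ < 0`, `θ < 0` and
`θ ≢ γ` modulo squares of `K^×` (encoded by: `θ ≠ γ·(w₀² + a·w₁²)` whenever `w₀·w₁ = 0`),
one has `z·σ(z) ≠ θ` for every quaternion `z ∈ ℍ[F, a, γ]`; consequently every nonzero
element of the iterated code `α_θ(Q, Q)` has nonzero determinant. -/
theorem stmt8 {F : Type} [Field F] [LinearOrder F] [IsStrictOrderedRing F] (a γ θ : F)
    (ha : a < 0) (hγ : γ < 0) (hθ : θ < 0)
    (h2 : ∀ w₀ w₁ : F, w₀ * w₁ = 0 → θ ≠ γ * (w₀ ^ 2 + a * w₁ ^ 2)) :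
    ∀ z : ℍ[F, a, γ], z * qsigma a γ z ≠ (θ : ℍ[F, a, γ]) :=
  stmt8_general ha.le hγ hθ fun w => by simpa using h2 w 0 (mul_zero w)
end
end

section
/- Let F be a field of characteristic different from 2, let a ∈ F not be a square in F, and let γ, θ ∈ F with γ ≠ 0. Suppose (i) the quadratic form ⟨1, −a, γa, −θ⟩ is anisotropic over F, i.e., for all x, y, z, w ∈ F, x² − a·y² + γ·a·z² − θ·w² = 0 implies x = y = z = w = 0; and (ii) the quadratic form ⟨γ, −θ⟩ is anisotropic over K = F(√a), i.e., for all x₀, x₁, y₀, y₁ ∈ F, if γ·(x₀² + a·x₁²) = θ·(y₀² + a·y₁²) and γ·x₀·x₁ = θ·y₀·y₁, then x₀ = x₁ = y₀ = y₁ = 0. Then for every z ∈ ℍ[F,a,γ], z·σ(z) ≠ θ. -/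
open Quaternion

noncomputable section

/-!
Comparing coordinates, `z * σ z` is a scalar exactly when `z.imJ` annihilates `z.re`, `z.imI` and
`γ * z.imK`. If `z.imJ = 0`, then `z * σ z` is a value of the ternary form `⟨1, -a, γ * a⟩`.
Otherwise the three annihilated terms vanish, and `z * σ z = γ * z.imJ ^ 2`. Anisotropy of
`⟨1, -a, γ * a, -θ⟩` excludes the first kind of value for `θ`, that of `⟨γ, -θ⟩` the second.
-/

section

variable {F : Type} [Field F] {a γ θ : F}

lemma mul_qsigma (z : ℍ[F,a,γ]) :
    z * qsigma a γ z =
      ⟨z.re ^ 2 - a * z.imI ^ 2 + γ * z.imJ ^ 2 + γ * a * z.imK ^ 2,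
        2 * (z.imJ * (γ * z.imK)), 2 * (z.imJ * z.re), 2 * (z.imJ * z.imI)⟩ := by
  ext <;>
    simp only [qsigma, QuaternionAlgebra.re_mul, QuaternionAlgebra.imI_mul,
      QuaternionAlgebra.imJ_mul, QuaternionAlgebra.imK_mul] <;>
    ring

lemma mul_qsigma_eq_coe_iff (hchar : (2 : F) ≠ 0) (z : ℍ[F,a,γ]) :
    z * qsigma a γ z = (θ : ℍ[F,a,γ]) ↔
      z.re ^ 2 - a * z.imI ^ 2 + γ * z.imJ ^ 2 + γ * a * z.imK ^ 2 = θ ∧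
        z.imJ * (γ * z.imK) = 0 ∧ z.imJ * z.re = 0 ∧ z.imJ * z.imI = 0 := by
  simp [mul_qsigma, QuaternionAlgebra.ext_iff, hchar]

lemma mul_qsigma_eq_coe_iff_of_imJ_eq_zero {z : ℍ[F,a,γ]} (hz : z.imJ = 0) :
    z * qsigma a γ z = (θ : ℍ[F,a,γ]) ↔
      z.re ^ 2 - a * z.imI ^ 2 + γ * a * z.imK ^ 2 = θ := by
  simp [mul_qsigma, QuaternionAlgebra.ext_iff, hz]

lemma eq_mul_imJ_sq_of_mul_qsigma_eq_coe (hchar : (2 : F) ≠ 0) {z : ℍ[F,a,γ]}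
    (hz : z.imJ ≠ 0) (h : z * qsigma a γ z = (θ : ℍ[F,a,γ])) : γ * z.imJ ^ 2 = θ := by
  obtain ⟨hθ, hK, hre, hI⟩ := (mul_qsigma_eq_coe_iff hchar z).1 h
  have hK : γ * z.imK = 0 := (mul_eq_zero.1 hK).resolve_left hz
  have hre : z.re = 0 := (mul_eq_zero.1 hre).resolve_left hz
  have hI : z.imI = 0 := (mul_eq_zero.1 hI).resolve_left hz
  linear_combination hθ - z.re * hre + a * z.imI * hI - a * z.imK * hK

theorem stmt9_general (hchar : (2 : F) ≠ 0) :
    (∀ z : ℍ[F,a,γ], z * qsigma a γ z ≠ (θ : ℍ[F,a,γ])) ↔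
      (∀ x y z : F, x ^ 2 - a * y ^ 2 + γ * a * z ^ 2 ≠ θ) ∧ ∀ x : F, γ * x ^ 2 ≠ θ := by
  constructor
  · refine fun h ↦ ⟨fun x y z hθ ↦ h ⟨x, y, 0, z⟩ ?_, fun x hθ ↦ h ⟨0, 0, x, 0⟩ ?_⟩
    · exact (mul_qsigma_eq_coe_iff_of_imJ_eq_zero rfl).2 hθ
    · simpa [mul_qsigma, QuaternionAlgebra.ext_iff] using hθ
  · rintro ⟨hternary, hunary⟩ z h
    by_cases hz : z.imJ = 0
    · exact hternary _ _ _ ((mul_qsigma_eq_coe_iff_of_imJ_eq_zero hz).1 h)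
    · exact hunary _ (eq_mul_imJ_sq_of_mul_qsigma_eq_coe hchar hz h)

end

/-- for `F` of characteristic `≠ 2`, `a` a non-square, `γ ≠ 0`, if the
quadratic form `⟨1, −a, γa, −θ⟩` is anisotropic over `F` and `⟨γ, −θ⟩` is anisotropic
over `K = F(√a)` (expressed componentwise), then `z·σ(z) ≠ θ` for every quaternion `z`. -/
theorem stmt9 {F : Type} [Field F] (hchar : (2 : F) ≠ 0)
    (a : F) (ha : ¬ IsSquare a) (γ θ : F) (hγ : γ ≠ 0)
    (hformF : ∀ x y z w : F,
      x ^ 2 - a * y ^ 2 + γ * a * z ^ 2 - θ * w ^ 2 = 0 →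
        x = 0 ∧ y = 0 ∧ z = 0 ∧ w = 0)
    (hformK : ∀ x₀ x₁ y₀ y₁ : F,
      γ * (x₀ ^ 2 + a * x₁ ^ 2) = θ * (y₀ ^ 2 + a * y₁ ^ 2) → γ * x₀ * x₁ = θ * y₀ * y₁ →
        x₀ = 0 ∧ x₁ = 0 ∧ y₀ = 0 ∧ y₁ = 0) :
    ∀ z : ℍ[F, a, γ], z * qsigma a γ z ≠ (θ : ℍ[F, a, γ]) :=
  (stmt9_general hchar).2
    ⟨fun x y z h ↦ one_ne_zero (hformF x y z 1 (by linear_combination h)).2.2.2,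
      fun x h ↦ one_ne_zero (hformK x 0 1 0 (by linear_combination h) (by ring)).2.2.1⟩
end
end

section
/- Let F be a number field with ring of integers O_F, and let a ∈ O_F be a nonzero element such that the ideal a·O_F is prime. Let γ, θ ∈ O_F be such that neither θ nor γ is a square modulo a·O_F, i.e., for every b ∈ O_F, a does not divide b² − θ and a does not divide b² − γ. Then the quadratic form ⟨1, −a, γa, −θ⟩ is anisotropic over F: for all x, y, z, w ∈ F, if x² − a·y² + γ·a·z² − θ·w² = 0 then x = y = z = w = 0. -/
open NumberField

noncomputable section

/-!
This is the easy half of Springer's theorem. Suppose `Q₁ + a Q₂` vanishes at `(v₁, v₂)`. Then `a`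
divides `Q₁ v₁`, so anisotropy of `Q₁` modulo `a` gives `v₁ = a u₁`; cancelling one factor `a`, it
divides `Q₂ v₂`, so `v₂ = a u₂`, and `(u₁, u₂)` is again a zero. Iterating, `v₁` and `v₂` are
divisible by every power of `a`, hence vanish in an `a`-adically separated module.

The form `⟨1, -a, γa, -θ⟩` is `⟨1, -θ⟩ + a ⟨-1, γ⟩`, and over the residue field of `a` a binary form
`⟨s, t⟩` is anisotropic as soon as `-st` is not a square.
-/

open QuadraticMap

section Diagonal

variable {R : Type*} [CommRing R]

theorem map_weightedSumSquares {S ι : Type*} [CommRing S] [Fintype ι] (f : R →+* S)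
    (w v : ι → R) :
    f (weightedSumSquares R w v) = weightedSumSquares S (f ∘ w) (f ∘ v) := by
  simp [weightedSumSquares_apply]

theorem anisotropic_weightedSumSquares_algebraMap {ι : Type*} (K : Type*)
    [CommRing K] [Algebra R K] [IsFractionRing R K] [Fintype ι] {w : ι → R}
    (h : (weightedSumSquares R w).Anisotropic) :
    (weightedSumSquares K (algebraMap R K ∘ w)).Anisotropic := by
  intro v hv
  obtain ⟨b, hb⟩ := IsLocalization.exist_integer_multiples_of_finite (nonZeroDivisors R) v
  choose u hu using hb
  have hu : algebraMap R K ∘ u = algebraMap R K b • v :=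
    funext fun i ↦ (hu i).trans (Algebra.smul_def _ _)
  have hu0 : u = 0 := by
    apply h
    apply IsFractionRing.injective R K
    rw [map_weightedSumSquares, hu, QuadraticMap.map_smul, hv, smul_zero, map_zero]
  have hbv : algebraMap R K b • v = 0 := by
    rw [← hu, hu0]
    exact funext fun _ ↦ map_zero _
  exact (IsLocalization.map_units K b).smul_eq_zero.1 hbv

theorem anisotropic_weightedSumSquares_fin_two {k : Type*} [Field k] {w : Fin 2 → k}
    (hw : ¬ IsSquare (-(w 0 * w 1))) : (weightedSumSquares k w).Anisotropic := by
  intro v hv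
  have hv : w 0 * v 0 ^ 2 + w 1 * v 1 ^ 2 = 0 := by
    simpa [weightedSumSquares_apply, Fin.sum_univ_two, ← pow_two] using hv
  have hw0 : w 0 ≠ 0 := fun h ↦ hw (by simp [h])
  have hv1 : v 1 = 0 := by
    by_contra hv1
    refine hw ⟨w 0 * v 0 / v 1, ?_⟩
    field_simp
    linear_combination -hv
  have hv0 : v 0 = 0 := by simpa [hv1, hw0] using hv
  ext i
  fin_cases i
  exacts [hv0, hv1]

theorem eq_zero_of_anisotropic_fin_four {w : Fin 4 → R}
    (hw : (weightedSumSquares R w).Anisotropic) {x y z t : R}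
    (h : w 0 * x ^ 2 + w 1 * y ^ 2 + w 2 * z ^ 2 + w 3 * t ^ 2 = 0) :
    x = 0 ∧ y = 0 ∧ z = 0 ∧ t = 0 := by
  have hv : ![x, y, z, t] = 0 := hw _ (by
    simpa [weightedSumSquares_apply, Fin.sum_univ_four, ← pow_two] using h)
  simpa using hv

end Diagonal

section Residue

variable {R : Type*} [CommRing R]

/-- A quadratic form is anisotropic modulo `a` if it takes values divisible by `a` only at vectors
divisible by `a`; equivalently, the form it induces on `M ⧸ aM` over `R ⧸ (a)` is anisotropic. The
condition is phrased in `M` itself so that a descent can divide by `a` repeatedly. -/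
def AnisotropicMod {M : Type*} [AddCommGroup M] [Module R M] (a : R) (Q : QuadraticForm R M) :
    Prop :=
  ∀ v, a ∣ Q v → ∃ u, v = a • u

theorem anisotropicMod_weightedSumSquares {ι : Type*} [Fintype ι] {a : R} {w : ι → R}
    (h : (weightedSumSquares (R ⧸ Ideal.span {a})
      (Ideal.Quotient.mk (Ideal.span {a}) ∘ w)).Anisotropic) :
    AnisotropicMod a (weightedSumSquares R w) := by
  intro v hv
  have hv0 : Ideal.Quotient.mk (Ideal.span {a}) ∘ v = 0 := by
    apply h
    rwa [← map_weightedSumSquares, Ideal.Quotient.eq_zero_iff_dvd]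
  have hdvd (i : ι) : a ∣ v i := (Ideal.Quotient.eq_zero_iff_dvd a _).1 (congrFun hv0 i)
  choose u hu using hdvd
  exact ⟨u, funext hu⟩

theorem not_isSquare_mk_span_singleton {a t : R} (ht : ∀ b : R, ¬ a ∣ b ^ 2 - t) :
    ¬ IsSquare (Ideal.Quotient.mk (Ideal.span {a}) t) := by
  rintro ⟨c, hc⟩
  obtain ⟨b, rfl⟩ := Ideal.Quotient.mk_surjective c
  refine ht b ((Ideal.Quotient.eq_zero_iff_dvd a _).1 ?_)
  rw [map_sub, map_pow, hc, pow_two, sub_self]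

theorem anisotropicMod_weightedSumSquares_fin_two {a : R} (ha : (Ideal.span {a}).IsMaximal)
    {w : Fin 2 → R} (hw : ∀ b : R, ¬ a ∣ b ^ 2 + w 0 * w 1) :
    AnisotropicMod a (weightedSumSquares R w) := by
  let := Ideal.Quotient.field (Ideal.span {a})
  apply anisotropicMod_weightedSumSquares
  apply anisotropic_weightedSumSquares_fin_two
  simp only [Function.comp_apply, ← map_mul, ← map_neg]
  exact not_isSquare_mk_span_singleton (by simpa only [sub_neg_eq_add] using hw)

end Residue

section Springer

variable {R : Type*} [CommRing R] {a : R}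

theorem eq_zero_of_forall_exists_eq_pow_smul {M : Type*} [AddCommGroup M] [Module R M]
    [IsHausdorff (Ideal.span {a}) M] {v : M} (hv : ∀ n : ℕ, ∃ u, v = a ^ n • u) : v = 0 := by
  refine IsHausdorff.haus (I := Ideal.span {a}) ‹_› v fun n ↦ ?_
  obtain ⟨u, rfl⟩ := hv n
  rw [SModEq.zero, Ideal.span_singleton_pow]
  exact Submodule.smul_mem_smul (Ideal.mem_span_singleton_self _) trivial

theorem isHausdorff_pi (I : Ideal R) (ι M : Type*) [AddCommGroup M] [Module R M]
    [IsHausdorff I M] : IsHausdorff I (ι → M) := by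
  refine ⟨fun v hv ↦ funext fun i ↦ IsHausdorff.haus (I := I) ‹_› _ fun n ↦ ?_⟩
  refine ((hv n).map (LinearMap.proj i)).mono ?_
  rw [Submodule.map_smul'']
  exact Submodule.smul_mono le_rfl le_top

variable {M₁ M₂ : Type*} [AddCommGroup M₁] [Module R M₁] [AddCommGroup M₂] [Module R M₂]
  {Q₁ : QuadraticForm R M₁} {Q₂ : QuadraticForm R M₂}

theorem AnisotropicMod.exists_eq_smul_of_prod_smul_eq_zero (ha : IsLeftRegular a)
    (h₁ : AnisotropicMod a Q₁) (h₂ : AnisotropicMod a Q₂) {v : M₁ × M₂}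
    (hv : Q₁.prod (a • Q₂) v = 0) : ∃ u, v = a • u ∧ Q₁.prod (a • Q₂) u = 0 := by
  obtain ⟨v₁, v₂⟩ := v
  simp only [prod_apply, smul_apply, smul_eq_mul] at hv ⊢
  obtain ⟨u₁, rfl⟩ := h₁ v₁ ⟨-Q₂ v₂, by linear_combination hv⟩
  rw [QuadraticMap.map_smul, smul_eq_mul] at hv
  have hv₂ : a * Q₁ u₁ + Q₂ v₂ = 0 := ha (by linear_combination hv)
  obtain ⟨u₂, rfl⟩ := h₂ v₂ ⟨-Q₁ u₁, by linear_combination hv₂⟩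
  rw [QuadraticMap.map_smul, smul_eq_mul] at hv₂
  exact ⟨(u₁, u₂), rfl, ha (by linear_combination hv₂)⟩

theorem AnisotropicMod.exists_eq_pow_smul_of_prod_smul_eq_zero (ha : IsLeftRegular a)
    (h₁ : AnisotropicMod a Q₁) (h₂ : AnisotropicMod a Q₂) (n : ℕ) {v : M₁ × M₂}
    (hv : Q₁.prod (a • Q₂) v = 0) : ∃ u, v = a ^ n • u := by
  induction n generalizing v with
  | zero => exact ⟨v, by simp⟩
  | succ n ih =>
    obtain ⟨v', rfl, hv'⟩ := h₁.exists_eq_smul_of_prod_smul_eq_zero ha h₂ hv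
    obtain ⟨u, rfl⟩ := ih hv'
    exact ⟨u, by rw [smul_smul, pow_succ']⟩

theorem AnisotropicMod.anisotropic_prod_smul [IsHausdorff (Ideal.span {a}) M₁]
    [IsHausdorff (Ideal.span {a}) M₂] (ha : IsLeftRegular a)
    (h₁ : AnisotropicMod a Q₁) (h₂ : AnisotropicMod a Q₂) :
    (Q₁.prod (a • Q₂)).Anisotropic := by
  intro v hv
  have hdiv (n : ℕ) := h₁.exists_eq_pow_smul_of_prod_smul_eq_zero ha h₂ n hv
  refine Prod.ext (eq_zero_of_forall_exists_eq_pow_smul (a := a) fun n ↦ ?_)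
    (eq_zero_of_forall_exists_eq_pow_smul (a := a) fun n ↦ ?_)
  · exact (hdiv n).imp' Prod.fst fun _ hu ↦ congrArg Prod.fst hu
  · exact (hdiv n).imp' Prod.snd fun _ hu ↦ congrArg Prod.snd hu

end Springer

theorem stmt10_general {R : Type*} (K : Type*) [CommRing R] [IsDomain R] [Field K] [Algebra R K]
    [IsFractionRing R K] {a γ θ : R} [IsHausdorff (Ideal.span {a}) R] (ha : a ≠ 0)
    (hmax : (Ideal.span {a}).IsMaximal) (hθ : ∀ b : R, ¬ a ∣ b ^ 2 - θ)
    (hγ : ∀ b : R, ¬ a ∣ b ^ 2 - γ) :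
    (weightedSumSquares K (algebraMap R K ∘ ![1, -a, γ * a, -θ])).Anisotropic := by
  apply anisotropic_weightedSumSquares_algebraMap
  intro v hv
  have hsep := isHausdorff_pi (Ideal.span {a}) (Fin 2) R
  have h₁ : AnisotropicMod a (weightedSumSquares R ![1, -θ]) :=
    anisotropicMod_weightedSumSquares_fin_two hmax (by simpa [← sub_eq_add_neg] using hθ)
  have h₂ : AnisotropicMod a (weightedSumSquares R ![-1, γ]) :=
    anisotropicMod_weightedSumSquares_fin_two hmax (by simpa [← sub_eq_add_neg] using hγ)
  have hsplit : weightedSumSquares R ![1, -a, γ * a, -θ] v =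
      (weightedSumSquares R ![1, -θ]).prod (a • weightedSumSquares R ![-1, γ])
        (![v 0, v 3], ![v 1, v 2]) := by
    simp only [prod_apply, smul_apply, weightedSumSquares_apply, Fin.sum_univ_four,
      Fin.sum_univ_two, smul_eq_mul, Matrix.cons_val]
    ring
  have hpair : (![v 0, v 3], ![v 1, v 2]) = 0 :=
    h₁.anisotropic_prod_smul (IsRegular.of_ne_zero ha).left h₂ _ (hsplit ▸ hv)
  ext i
  fin_cases i <;> simp_all [funext_iff, Fin.forall_fin_succ]

/-- for a number field `F` with ring of integers `O_F`, if `a ∈ O_F` is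
nonzero and generates a prime ideal, and neither `θ` nor `γ` is a square modulo `a·O_F`,
then the quadratic form `⟨1, −a, γa, −θ⟩` is anisotropic over `F`. -/
theorem stmt10 (F : Type) [Field F] [NumberField F]
    (a γ θ : 𝓞 F) (ha0 : a ≠ 0)
    (hprime : (Ideal.span ({a} : Set (𝓞 F))).IsPrime)
    (hθ : ∀ b : 𝓞 F, ¬ (a ∣ b ^ 2 - θ))
    (hγ : ∀ b : 𝓞 F, ¬ (a ∣ b ^ 2 - γ)) :
    ∀ x y z w : F,
      x ^ 2 - (algebraMap (𝓞 F) F a) * y ^ 2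
          + (algebraMap (𝓞 F) F γ) * (algebraMap (𝓞 F) F a) * z ^ 2
          - (algebraMap (𝓞 F) F θ) * w ^ 2 = 0 →
        x = 0 ∧ y = 0 ∧ z = 0 ∧ w = 0 := by
  have hsep := IsHausdorff.of_isDomain _ hprime.ne_top
  have hmax := hprime.isMaximal (mt Ideal.span_singleton_eq_bot.1 ha0)
  exact fun x y z w h ↦ eq_zero_of_anisotropic_fin_four (stmt10_general F ha0 hmax hθ hγ)
    (by simp only [Function.comp_apply, Matrix.cons_val, map_one, map_neg, map_mul]
        linear_combination h)
end
end

section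
/- In the field F = ℚ(√−7), the element −17 is not a sum of three squares: for all x, y, z ∈ F, x² + y² + z² ≠ −17. -/
open Polynomial

noncomputable section

/-- The quadratic number field `F = ℚ(√−7)`, realized as `ℚ[X]/(X² + 7)`. -/
def Qsqrtm7 : Type := AdjoinRoot ((X : ℚ[X]) ^ 2 + C 7)

instance : CommRing Qsqrtm7 := inferInstanceAs (CommRing (AdjoinRoot ((X : ℚ[X]) ^ 2 + C 7)))

/-!
Since `-7 ≡ 1 (mod 8)`, Hensel's lemma provides a square root of `-7` in `ℚ_[2]`, so `ℚ(√−7)`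
maps to `ℚ_[2]`. There `17 ≡ 1 (mod 8)` is a nonzero square as well, so `-17 = x² + y² + z²` would
give a nontrivial zero of the sum of four squares. Dividing by a coordinate of largest norm makes
one coordinate equal to `1` and the others integral, and reduction modulo `8` writes `-1` as a sum
of three squares in `ZMod 8`, where the squares are only `0`, `1` and `4`.
-/

lemma padicInt_isSquare_of_norm_sq_sub_lt {p : ℕ} [Fact p.Prime] {a u : ℤ_[p]}
    (h : ‖a ^ 2 - u‖ < ‖2 * a‖ ^ 2) : IsSquare u := by
  obtain ⟨s, hs, -⟩ := hensels_lemma (F := X ^ 2 - C u) (a := a) (by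
    simpa [one_add_one_eq_two] using h)
  have hsu : s ^ 2 - u = 0 := by simpa using hs
  exact ⟨s, by linear_combination -hsu⟩

lemma padicInt_two_isSquare_of_eight_dvd_sub_one {u : ℤ_[2]} (hu : 8 ∣ u - 1) : IsSquare u := by
  have norm_two : ‖(2 : ℤ_[2])‖ = 2⁻¹ := by simpa using PadicInt.norm_p (p := 2)
  obtain ⟨k, hk⟩ := hu
  apply padicInt_isSquare_of_norm_sq_sub_lt (a := 1)
  calc ‖1 ^ 2 - u‖ = ‖(2 : ℤ_[2])‖ ^ 3 * ‖k‖ := by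
        rw [one_pow, norm_sub_rev, hk, ← norm_pow, ← norm_mul]
        norm_num
    _ ≤ ‖(2 : ℤ_[2])‖ ^ 3 := mul_le_of_le_one_right (by positivity) k.norm_le_one
    _ < ‖(2 * 1 : ℤ_[2])‖ ^ 2 := by
        rw [mul_one, norm_two]
        norm_num

lemma exists_forall_isInteger_div {A K ι : Type*} [CommRing A] [IsDomain A] [ValuationRing A]
    [Field K] [Algebra A K] [IsFractionRing A K] [Finite ι] {v : ι → K} (hv : v ≠ 0) :
    ∃ i, v i ≠ 0 ∧ ∀ j, IsLocalization.IsInteger A (v j / v i) := by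
  let ν := ValuationRing.valuation A K
  obtain ⟨k, hk⟩ := Function.ne_iff.mp hv
  have : Nonempty ι := ⟨k⟩
  obtain ⟨i, hi⟩ := Finite.exists_max fun j ↦ ν (v j)
  have hνi : 0 < ν (v i) := (ν.pos_iff.mpr hk).trans_le (hi k)
  refine ⟨i, ν.pos_iff.mp hνi, fun j ↦ (ValuationRing.mem_integer_iff A K _).mp ?_⟩
  change ν (v j / v i) ≤ 1
  rw [map_div₀]
  exact (div_le_one₀ hνi).mpr (hi j)

lemma sum_three_sq_ne_neg_one_zmod_eight (v : Fin 3 → ZMod 8) : ∑ i, v i ^ 2 ≠ -1 := by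
  have h : ∀ a b c : ZMod 8, a ^ 2 + b ^ 2 + c ^ 2 ≠ -1 := by decide +kernel
  simpa only [Fin.sum_univ_three] using h (v 0) (v 1) (v 2)

lemma padicInt_two_ne_one_of_sum_four_sq_eq_zero {w : Fin 4 → ℤ_[2]} (hw : ∑ i, w i ^ 2 = 0)
    (i : Fin 4) : w i ≠ 1 := by
  intro hi
  let r : ℤ_[2] →+* ZMod 8 := PadicInt.toZModPow 3
  rw [Fin.sum_univ_succAbove _ i, hi, one_pow] at hw
  apply sum_three_sq_ne_neg_one_zmod_eight fun j ↦ r (w (i.succAbove j))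
  simpa only [map_sum, map_pow, map_neg, map_one] using congrArg r (eq_neg_of_add_eq_zero_right hw)

lemma padic_two_eq_zero_of_sum_four_sq_eq_zero {v : Fin 4 → ℚ_[2]} (hv : ∑ i, v i ^ 2 = 0) :
    v = 0 := by
  by_contra hne
  obtain ⟨i, hi, hint⟩ := exists_forall_isInteger_div (A := ℤ_[2]) hne
  choose w hw using hint
  have hwi : w i = 1 := PadicInt.ext (by simpa [hi] using hw i)
  have hsum : ∑ j, w j ^ 2 = 0 := by
    apply IsFractionRing.injective ℤ_[2] ℚ_[2]
    simp only [map_sum, map_pow, hw, div_pow, ← Finset.sum_div, hv, zero_div, map_zero]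
  exact padicInt_two_ne_one_of_sum_four_sq_eq_zero hsum i hwi

lemma padic_two_sum_three_sq_ne {u : ℤ_[2]} (hu : 8 ∣ u + 1) (x y z : ℚ_[2]) :
    x ^ 2 + y ^ 2 + z ^ 2 ≠ u := by
  intro h
  have hneg : 8 ∣ -u - 1 := by simpa [sub_eq_add_neg, add_comm] using hu.neg_right
  obtain ⟨s, hs⟩ := padicInt_two_isSquare_of_eight_dvd_sub_one hneg
  have hs₂ : -(u : ℚ_[2]) = s ^ 2 := by
    exact_mod_cast congrArg ((↑) : ℤ_[2] → ℚ_[2]) (hs.trans (sq s).symm)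
  have hv : ∑ i, (![x, y, z, (s : ℚ_[2])] : Fin 4 → ℚ_[2]) i ^ 2 = 0 := by
    simp [Fin.sum_univ_four, h, ← hs₂]
  have hs₀ : s = 0 := by simpa using congrFun (padic_two_eq_zero_of_sum_four_sq_eq_zero hv) 3
  have hu₀ : u = 0 := by simpa [hs₀] using hs
  have eight_dvd_one : (2 : ℤ_[2]) ^ 3 ∣ (1 : ℤ) := by convert hu using 1 <;> norm_num [hu₀]
  exact absurd ((PadicInt.pow_p_dvd_int_iff 3 1).mp eight_dvd_one) (by decide)

theorem stmt12_general {R : Type*} [Ring R] (φ : R →+* ℚ_[2]) {n : ℤ} (hn : 8 ∣ n + 1)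
    (x y z : R) : x ^ 2 + y ^ 2 + z ^ 2 ≠ n := by
  intro h
  have hn₂ : (8 : ℤ_[2]) ∣ n + 1 := by exact_mod_cast map_dvd (Int.castRingHom ℤ_[2]) hn
  apply padic_two_sum_three_sq_ne hn₂ (φ x) (φ y) (φ z)
  simpa using congrArg φ h

lemma Qsqrtm7.nonempty_ringHom_padic_two : Nonempty (Qsqrtm7 →+* ℚ_[2]) := by
  obtain ⟨s, hs⟩ : IsSquare (-7 : ℤ_[2]) :=
    padicInt_two_isSquare_of_eight_dvd_sub_one ⟨-1, by norm_num⟩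
  have hroot : s ^ 2 + 7 = 0 := by linear_combination -hs
  have hroot₂ : (s : ℚ_[2]) ^ 2 + 7 = 0 := by
    exact_mod_cast congrArg ((↑) : ℤ_[2] → ℚ_[2]) hroot
  exact ⟨AdjoinRoot.lift (algebraMap ℚ ℚ_[2]) s (by simpa using hroot₂)⟩

/-- in `F = ℚ(√−7)`, the element `−17` is not a sum of three squares. -/
theorem stmt12 : ∀ x y z : Qsqrtm7, x ^ 2 + y ^ 2 + z ^ 2 ≠ -17 := by
  obtain ⟨φ⟩ := Qsqrtm7.nonempty_ringHom_padic_two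
  exact_mod_cast stmt12_general φ (n := -17) (by norm_num)
end
end

section
/- Let L be a field and σ, τ ring automorphisms of L with σ³ = id, τ² = id and σ∘τ = τ∘σ. Let γ ∈ L with σ(γ) = γ and τ(γ) = γ, and let θ ∈ L with σ(θ) = θ and τ(θ³) ≠ θ³. Let D ⊆ M₃(L) be the set of matrices of the form [[a, γ·σ(c), γ·σ²(b)], [b, σ(a), γ·σ²(c)], [c, σ(b), σ²(a)]] with a, b, c ∈ L, and assume every nonzero element of D is an invertible matrix. Then for all X, Y ∈ D with (X,Y) ≠ (0,0), the 6×6 block matrix α_θ(X,Y) = [[X, θ·τ(Y)],[Y, τ(X)]] is invertible; i.e., the iterated construction satisfies the full diversity property. -/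
/-
The set `D` is a subring of the matrix ring, stable under inversion and under `τ`, and it contains
the scalar `θ`. Hence if `X ≠ 0`, the Schur complement `X - θ τ(Y) τ(X)⁻¹ Y` of the block matrix
lies in `D`, so it is invertible unless it vanishes. If it vanishes, taking determinants gives
`N(X) = θ ^ 3 N(Y)`, where `N(M) = det M * τ (det M)` is fixed by `τ`; as `N(X) ≠ 0`, this makes
`θ ^ 3` fixed by `τ`.
-/

open Matrix

noncomputable section

/-- The image `D ⊆ M₃(L)` of the degree-3 cyclic algebra `(L/K, σ, γ)` under its
left-regular representation. -/
def cyclicRep3 {L : Type} [Field L] (σ : RingAut L) (γ : L) :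
    Set (Matrix (Fin 3) (Fin 3) L) :=
  {M | ∃ a b c : L,
    M = !![a, γ * σ c, γ * σ (σ b);
           b, σ a, γ * σ (σ c);
           c, σ b, σ (σ a)]}

section TwistedCentralizer

variable {A : Type*} [Ring A]

/-- The centralizer of `p` twisted by a ring endomorphism `φ`: the subring of all `m` with
`p * φ m = m * p`. For matrices and entrywise `φ` it is the commutant of the semilinear map
`v ↦ p (φ v)`; this is how a cyclic algebra is recognized inside a matrix ring. -/
def twistedCentralizer (φ : A →+* A) (p : A) : Subring A where
  carrier := {m | SemiconjBy p (φ m) m}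
  mul_mem' ha hb := by
    simpa only [Set.mem_ofPred_eq, map_mul] using SemiconjBy.mul_right ha hb
  one_mem' := by
    simpa only [Set.mem_ofPred_eq, map_one] using SemiconjBy.one_right p
  add_mem' ha hb := by
    simpa only [Set.mem_ofPred_eq, map_add] using SemiconjBy.add_right ha hb
  zero_mem' := by
    simpa only [Set.mem_ofPred_eq, map_zero] using SemiconjBy.zero_right p
  neg_mem' ha := by
    simpa only [Set.mem_ofPred_eq, map_neg] using SemiconjBy.neg_right ha

variable {φ : A →+* A} {p : A}

theorem mem_twistedCentralizer_iff {m : A} :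
    m ∈ twistedCentralizer φ p ↔ p * φ m = m * p :=
  Iff.rfl

theorem units_inv_mem_twistedCentralizer {u : Aˣ} (hu : (u : A) ∈ twistedCentralizer φ p) :
    (↑u⁻¹ : A) ∈ twistedCentralizer φ p :=
  SemiconjBy.units_inv_right (x := Units.map (φ : A →* A) u) hu

theorem map_mem_twistedCentralizer {ψ : A →+* A} (hψp : ψ p = p)
    (hcomm : ∀ a, φ (ψ a) = ψ (φ a)) {m : A} (hm : m ∈ twistedCentralizer φ p) :
    ψ m ∈ twistedCentralizer φ p := by
  rw [mem_twistedCentralizer_iff] at hm ⊢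
  calc p * φ (ψ m) = ψ (p * φ m) := by rw [hcomm, map_mul, hψp]
    _ = ψ m * p := by rw [hm, map_mul, hψp]

end TwistedCentralizer

section FullDiversity

theorem map_eq_self_of_mul_map_eq {M F : Type*} [CommMonoid M] [FunLike F M M]
    [MonoidHomClass F M M] {τ : F} (hτ : Function.Involutive τ) {x y t : M} (hx : IsUnit x)
    (h : x * τ x = t * (y * τ y)) : τ t = t := by
  have hy : IsUnit (y * τ y) := isUnit_of_mul_isUnit_right (h ▸ hx.mul (hx.map τ))
  refine hy.mul_right_cancel ?_
  calc τ t * (y * τ y) = τ (t * (y * τ y)) := by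
        rw [map_mul, map_mul, hτ, mul_comm (τ y)]
    _ = x * τ x := by rw [← h, map_mul, hτ, mul_comm]
    _ = t * (y * τ y) := h

variable {R n : Type*} [CommRing R] [Fintype n] [DecidableEq n]

theorem isUnit_fromBlocks_zero₁₁_zero₂₂ {B C : Matrix n n R} (hB : IsUnit B) (hC : IsUnit C) :
    IsUnit (fromBlocks 0 B C 0) := by
  rw [isUnit_iff_isUnit_det] at hB hC
  refine IsUnit.of_mul_eq_one (fromBlocks 0 C⁻¹ B⁻¹ 0) ?_
  simp only [fromBlocks_multiply, mul_nonsing_inv _ hB, mul_nonsing_inv _ hC, zero_mul, mul_zero,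
    zero_add, add_zero, fromBlocks_one]

variable {τ : R →+* R} {θ : R}

theorem map_pow_card_eq_self_of_eq_smul_mul_mul (hτ : Function.Involutive τ)
    {X Y W : Matrix n n R} (hW : W * X.map τ = 1) (h : X = θ • Y.map τ * W * Y) :
    τ (θ ^ Fintype.card n) = θ ^ Fintype.card n := by
  have hdet_map (M : Matrix n n R) : (M.map τ).det = τ M.det := (τ.map_det M).symm
  have hWdet : W.det * τ X.det = 1 := by
    rw [← hdet_map, ← det_mul, hW, det_one]
  have hXunit : IsUnit X.det := by
    simpa only [hτ X.det] using (IsUnit.of_mul_eq_one_right _ hWdet).map τ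
  have hXdet : X.det = θ ^ Fintype.card n * τ Y.det * W.det * Y.det := by
    rw [← hdet_map, ← det_smul, ← det_mul, ← det_mul, ← h]
  refine map_eq_self_of_mul_map_eq (y := Y.det) hτ hXunit ?_
  linear_combination τ X.det * hXdet + θ ^ Fintype.card n * τ Y.det * Y.det * hWdet

theorem isUnit_smul_one_of_map_pow_card_ne {D : Subring (Matrix n n R)}
    (hunit : ∀ M ∈ D, M ≠ 0 → IsUnit M) (hθD : (θ • 1 : Matrix n n R) ∈ D)
    (hθ : τ (θ ^ Fintype.card n) ≠ θ ^ Fintype.card n) : IsUnit (θ • 1 : Matrix n n R) := by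
  refine hunit _ hθD fun hzero => hθ ?_
  have hdet : θ ^ Fintype.card n = (0 : Matrix n n R).det := by
    rw [← hzero, det_smul, det_one, mul_one]
  rw [hdet, RingHom.map_det, map_zero]

theorem isUnit_fromBlocks_of_mem_subring (hτ : Function.Involutive τ)
    {D : Subring (Matrix n n R)} (hunit : ∀ M ∈ D, M ≠ 0 → IsUnit M)
    (hinv : ∀ u : (Matrix n n R)ˣ, (u : Matrix n n R) ∈ D → (↑u⁻¹ : Matrix n n R) ∈ D)
    (hmap : ∀ M ∈ D, M.map τ ∈ D) (hθD : (θ • 1 : Matrix n n R) ∈ D)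
    (hθ : τ (θ ^ Fintype.card n) ≠ θ ^ Fintype.card n) {X Y : Matrix n n R}
    (hX : X ∈ D) (hY : Y ∈ D) (hXY : ¬(X = 0 ∧ Y = 0)) :
    IsUnit (fromBlocks X (θ • Y.map τ) Y (X.map τ)) := by
  by_cases hX0 : X = 0
  · have hYunit : IsUnit Y := hunit Y hY fun hY0 => hXY ⟨hX0, hY0⟩
    have hθY : IsUnit (θ • Y.map τ) := by
      rw [← smul_one_mul]
      exact (isUnit_smul_one_of_map_pow_card_ne hunit hθD hθ).mul (hYunit.map τ.mapMatrix)
    rw [hX0, Matrix.map_zero _ (map_zero τ)]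
    exact isUnit_fromBlocks_zero₁₁_zero₂₂ hθY hYunit
  · obtain ⟨W, hW⟩ := (hunit X hX hX0).map τ.mapMatrix
    replace hW : (W : Matrix n n R) = X.map τ := hW
    have hWinv : (↑W⁻¹ : Matrix n n R) ∈ D := hinv W (hW ▸ hmap X hX)
    have hschur_mem : X - θ • Y.map τ * (↑W⁻¹ : Matrix n n R) * Y ∈ D := by
      rw [← smul_one_mul θ (Y.map τ)]
      exact sub_mem hX (mul_mem (mul_mem (mul_mem hθD (hmap Y hY)) hWinv) hY)
    have hschur_ne : X - θ • Y.map τ * (↑W⁻¹ : Matrix n n R) * Y ≠ 0 := fun h =>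
      hθ (map_pow_card_eq_self_of_eq_smul_mul_mul hτ (hW ▸ W.inv_mul) (sub_eq_zero.1 h))
    let _ := W.invertible
    rw [← hW, isUnit_fromBlocks_iff_of_invertible₂₂, invOf_units]
    exact hunit _ hschur_mem hschur_ne

end FullDiversity

section CyclicAlgebra

/-- The matrix of left multiplication by the generator `e` of the cyclic algebra of degree 3 with
`e ^ 3 = γ`, in the basis `1, e, e ^ 2` of this algebra as a right vector space. It cuts out
`cyclicRep3` as a twisted centralizer. -/
def cyclicGenerator3 {R : Type*} [Zero R] [One R] (γ : R) : Matrix (Fin 3) (Fin 3) R :=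
  !![0, 0, γ; 1, 0, 0; 0, 1, 0]

theorem mul_cyclicGenerator3 {R : Type*} [NonAssocSemiring R] (γ : R)
    (M : Matrix (Fin 3) (Fin 3) R) :
    M * cyclicGenerator3 γ =
      !![M 0 1, M 0 2, M 0 0 * γ; M 1 1, M 1 2, M 1 0 * γ; M 2 1, M 2 2, M 2 0 * γ] := by
  ext i j
  fin_cases i <;> fin_cases j <;> simp [cyclicGenerator3, mul_apply, Fin.sum_univ_three]

theorem cyclicGenerator3_mul {R : Type*} [NonAssocSemiring R] (γ : R)
    (M : Matrix (Fin 3) (Fin 3) R) :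
    cyclicGenerator3 γ * M =
      !![γ * M 2 0, γ * M 2 1, γ * M 2 2; M 0 0, M 0 1, M 0 2; M 1 0, M 1 1, M 1 2] := by
  ext i j
  fin_cases i <;> fin_cases j <;> simp [cyclicGenerator3, mul_apply, Fin.sum_univ_three]

theorem map_cyclicGenerator3 {R S F : Type*} [Zero R] [One R] [Zero S] [One S] [FunLike F R S]
    [ZeroHomClass F R S] [OneHomClass F R S] (f : F) (γ : R) :
    (cyclicGenerator3 γ).map f = cyclicGenerator3 (f γ) := by
  ext i j
  fin_cases i <;> fin_cases j <;> simp [cyclicGenerator3]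

/- As `x * e = e * σ x` for `x` in `L`, right multiplication by `e` is `v ↦ P (σ v)` in coordinates,
with `P` the matrix of `e`; the matrices of left multiplications are those commuting with it. -/
theorem coe_twistedCentralizer_cyclicGenerator3 {L : Type} [Field L] {σ : RingAut L}
    (hσ : σ ^ 3 = 1) {γ : L} (hγ : σ γ = γ) :
    (twistedCentralizer (σ : L →+* L).mapMatrix (cyclicGenerator3 γ) :
      Set (Matrix (Fin 3) (Fin 3) L)) = cyclicRep3 σ γ := by
  have hσσσ (x : L) : σ (σ (σ x)) = x := DFunLike.congr_fun hσ x
  ext M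
  rw [SetLike.mem_coe, mem_twistedCentralizer_iff, cyclicGenerator3_mul, mul_cyclicGenerator3]
  constructor
  · intro h
    have entry (i j : Fin 3) := congrFun₂ h i j
    have h01 : γ * σ (M 2 0) = M 0 1 := entry 0 0
    have h02 : γ * σ (M 2 1) = M 0 2 := entry 0 1
    have h11 : σ (M 0 0) = M 1 1 := entry 1 0
    have hσ01 : σ (M 0 1) = M 1 2 := entry 1 1
    have h12 : γ * σ (σ (M 2 0)) = M 1 2 := by rw [← hσ01, ← h01, map_mul, hγ]
    have h21 : σ (M 1 0) = M 2 1 := entry 2 0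
    have h22 : σ (M 1 1) = M 2 2 := entry 2 1
    refine ⟨M 0 0, M 1 0, M 2 0, ?_⟩
    rw [h01, h21, h02, h11, h12, h22]
    exact eta_fin_three M
  · rintro ⟨a, b, c, rfl⟩
    ext i j
    fin_cases i <;> fin_cases j <;> simp [hγ, hσσσ, mul_comm]

theorem smul_one_mem_cyclicRep3 {L : Type} [Field L] {σ : RingAut L} (γ : L) {θ : L}
    (hθ : σ θ = θ) : (θ • 1 : Matrix (Fin 3) (Fin 3) L) ∈ cyclicRep3 σ γ :=
  ⟨θ, 0, 0, by simp [one_fin_three, hθ]⟩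

end CyclicAlgebra

/-- let `σ, τ` be commuting ring automorphisms of `L` with `σ³ = id` and
`τ² = id`, let `γ` be fixed by `σ` and `τ`, and let `θ` be fixed by `σ` with
`τ(θ³) ≠ θ³`. If every nonzero element of `D` is invertible, then for all `X, Y ∈ D`
not both zero, the block matrix `α_θ(X,Y) = [[X, θ·τ(Y)], [Y, τ(X)]]` is invertible:
the iterated construction is fully diverse. -/
theorem stmt17 {L : Type} [Field L] (σ τ : RingAut L)
    (hσ3 : σ ^ 3 = 1) (hτ2 : τ ^ 2 = 1) (hcomm : σ * τ = τ * σ)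
    (γ : L) (hσγ : σ γ = γ) (hτγ : τ γ = γ)
    (θ : L) (hσθ : σ θ = θ) (hτθ : τ (θ ^ 3) ≠ θ ^ 3)
    (hdiv : ∀ M ∈ cyclicRep3 σ γ, M ≠ 0 → IsUnit M) :
    ∀ X ∈ cyclicRep3 σ γ, ∀ Y ∈ cyclicRep3 σ γ, ¬ (X = 0 ∧ Y = 0) →
      IsUnit (Matrix.fromBlocks X (θ • Y.map ⇑τ) Y (X.map ⇑τ)) := by
  intro X hX Y hY hXY
  have hθD := smul_one_mem_cyclicRep3 γ hσθ
  rw [← coe_twistedCentralizer_cyclicGenerator3 hσ3 hσγ] at hX hY hθD hdiv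
  have hτe : (τ : L →+* L).mapMatrix (cyclicGenerator3 γ) = cyclicGenerator3 γ :=
    (map_cyclicGenerator3 τ γ).trans (congrArg cyclicGenerator3 hτγ)
  have hστ (M : Matrix (Fin 3) (Fin 3) L) :
      (σ : L →+* L).mapMatrix ((τ : L →+* L).mapMatrix M) =
        (τ : L →+* L).mapMatrix ((σ : L →+* L).mapMatrix M) :=
    Matrix.ext fun i j => DFunLike.congr_fun hcomm (M i j)
  exact isUnit_fromBlocks_of_mem_subring (τ := (τ : L →+* L)) (DFunLike.congr_fun hτ2) hdiv
    (fun _ => units_inv_mem_twistedCentralizer)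
    (fun _ => map_mem_twistedCentralizer hτe hστ) hθD
    (by rw [Fintype.card_fin]; exact hτθ) hX hY hXY
end
end

section
/- Let L = ℚ(ζ₇) be the 7th cyclotomic field with ζ₇ a primitive 7th root of unity, let σ be the ℚ-algebra automorphism of L determined by σ(ζ₇) = ζ₇², and let K be the fixed field of the subgroup generated by σ (so K = ℚ(√−7) and L/K is cyclic of degree 3). Then 3 is not a norm of the extension L/K: for every x ∈ L, N_{L/K}(x) ≠ 3. (Consequently the cyclic algebra (L/K, σ, 3) is a division algebra.) -/
noncomputable section

/-!
Let `p` be a rational prime that stays prime in `𝓞 L`. Only elements divisible by `p` have norm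
divisible by `p`, so the `p`-adic valuation of every norm from `L` to `ℚ` is a multiple of
`[L : ℚ]`. If `N_{L/K}(x) = q` is rational, then `N_{L/ℚ}(x) = q ^ [K : ℚ]`, hence `[L : K]`
divides the `p`-adic valuation of `q`; for `q = p` this forces `L = K`. The prime `3` stays prime
in `ℚ(ζ₇)` because it is a primitive root modulo `7`.
-/

open Module NumberField

theorem natCast_mem_of_liesOver {S : Type*} [CommRing S] (P : Ideal S) (m : ℕ)
    [P.LiesOver (Ideal.span {(m : ℤ)})] : (m : S) ∈ P := by
  simpa using
    (Ideal.mem_of_liesOver P (Ideal.span {(m : ℤ)}) m).mp (Ideal.mem_span_singleton_self _)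

section Inert

variable {S : Type*} [CommRing S] [IsDedekindDomain S] [Module.Free ℤ S] [Module.Finite ℤ S]
  {p : ℕ} [Fact p.Prime]

theorem natCast_dvd_of_dvd_norm (hp : Prime (p : S)) {y : S} (h : (p : ℤ) ∣ Algebra.norm ℤ y) :
    (p : S) ∣ y := by
  obtain ⟨P, hP, hPp, hPy⟩ := Ideal.exists_isMaximal_dvd_of_dvd_absNorm' (p := p) Fact.out
    (Ideal.span {y}) (by rwa [Ideal.absNorm_span_singleton, ← Int.natCast_dvd])
  have : P.LiesOver (Ideal.span {(p : ℤ)}) := ⟨hPp.symm⟩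
  have hp_max : (Ideal.span {(p : S)}).IsMaximal :=
    ((Ideal.span_singleton_prime hp.ne_zero).mpr hp).isMaximal (by simpa using hp.ne_zero)
  have hP_eq : Ideal.span {(p : S)} = P :=
    hp_max.eq_of_le hP.ne_top
      ((Ideal.span_singleton_le_iff_mem P).mpr (natCast_mem_of_liesOver P p))
  rwa [← hP_eq, Ideal.dvd_span_singleton, Ideal.mem_span_singleton] at hPy

theorem padicValInt_norm_eq_finrank_mul_multiplicity (hp : Prime (p : S)) {y : S} (hy : y ≠ 0) :
    padicValInt p (Algebra.norm ℤ y) = finrank ℤ S * multiplicity (p : S) y := by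
  obtain ⟨z, hz, hpz⟩ :=
    (FiniteMultiplicity.of_not_isUnit hp.not_isUnit hy).exists_eq_pow_mul_and_not_dvd
  have hpN : ¬ (p : ℤ) ∣ Algebra.norm ℤ z := fun h ↦ hpz (natCast_dvd_of_dvd_norm hp h)
  have hNz : Algebra.norm ℤ z ≠ 0 := fun h ↦ hpN (h ▸ dvd_zero _)
  have hNp : Algebra.norm ℤ (p : S) = (p : ℤ) ^ finrank ℤ S := by
    simpa using Algebra.norm_algebraMap (R := ℤ) (S := S) p
  have hp0 : (p : ℤ) ≠ 0 := mod_cast (Fact.out : p.Prime).ne_zero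
  conv_lhs => rw [hz, map_mul, map_pow, hNp, ← pow_mul]
  rw [padicValInt.mul (pow_ne_zero _ hp0) hNz, padicValInt.eq_zero_of_not_dvd hpN, add_zero]
  simp [padicValInt, Int.natAbs_pow]

end Inert

section NumberField

variable {L : Type*} [Field L] [NumberField L] {p : ℕ} [Fact p.Prime]

theorem prime_natCast_of_inertiaDeg_eq_finrank (P : Ideal (𝓞 L)) [P.IsPrime]
    [P.LiesOver (Ideal.span {(p : ℤ)})] (hP : P.inertiaDeg ℤ = finrank ℚ L) :
    Prime (p : 𝓞 L) := by
  have hp0 : (p : 𝓞 L) ≠ 0 := mod_cast (Fact.out : p.Prime).ne_zero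
  obtain ⟨J, hJ⟩ := Ideal.dvd_iff_le.mpr
    ((Ideal.span_singleton_le_iff_mem P).mpr (natCast_mem_of_liesOver P p))
  have hJ_norm : Ideal.absNorm J = 1 := by
    have h := congrArg Ideal.absNorm hJ
    rw [map_mul, Ideal.absNorm_span_natCast, ← Ideal.pow_inertiaDeg p P, hP,
      RingOfIntegers.rank] at h
    exact (left_eq_mul₀ (pow_ne_zero _ (Fact.out : p.Prime).ne_zero)).mp h
  rw [Ideal.absNorm_eq_one_iff.mp hJ_norm, Ideal.mul_top] at hJ
  rw [← Ideal.span_singleton_prime hp0, hJ]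
  infer_instance

theorem prime_natCast_of_orderOf_eq_totient {n : ℕ} [NeZero n] [IsCyclotomicExtension {n} ℚ L]
    (hp : orderOf (p : ZMod n) = n.totient) : Prime (p : 𝓞 L) := by
  have hpn : ¬ p ∣ n := by
    have hp_unit : IsUnit (p : ZMod n) :=
      (orderOf_pos_iff.mp (hp ▸ Nat.totient_pos.mpr (NeZero.pos n))).isUnit
    rwa [ZMod.isUnit_iff_coprime, (Fact.out : p.Prime).coprime_iff_not_dvd] at hp_unit
  obtain ⟨P, hP, hPp⟩ := Ideal.exists_maximal_ideal_liesOver_of_isIntegral (S := 𝓞 L)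
    (Ideal.span {(p : ℤ)})
  refine prime_natCast_of_inertiaDeg_eq_finrank P ?_
  rw [IsCyclotomicExtension.Rat.inertiaDeg_eq_of_not_dvd (m := n) p L P hpn, hp,
    IsCyclotomicExtension.finrank L (Polynomial.cyclotomic.irreducible_rat (NeZero.pos n))]

theorem finrank_dvd_padicValRat_norm (hp : Prime (p : 𝓞 L)) (x : L) :
    (finrank ℚ L : ℤ) ∣ padicValRat p (Algebra.norm ℚ x) := by
  obtain rfl | hx := eq_or_ne x 0
  · simp
  obtain ⟨a, b, -, hab⟩ := IsFractionRing.div_surjective (𝓞 L) x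
  obtain ⟨ha0, hb0⟩ : a ≠ 0 ∧ b ≠ 0 := by simpa [← hab] using hx
  have h_int {y : 𝓞 L} (hy : y ≠ 0) : (finrank ℚ L : ℤ) ∣ padicValInt p (Algebra.norm ℤ y) := by
    rw [padicValInt_norm_eq_finrank_mul_multiplicity hp hy, RingOfIntegers.rank]
    exact ⟨_, Nat.cast_mul _ _⟩
  have hN : Algebra.norm ℚ x * (Algebra.norm ℤ b : ℤ) = (Algebra.norm ℤ a : ℤ) := by
    rw [Algebra.coe_norm_int, Algebra.coe_norm_int, ← map_mul, ← hab,
      div_mul_cancel₀ _ (by simpa using hb0)]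
  have hv := congrArg (padicValRat p) hN
  rw [padicValRat.mul (by simpa using hx) (by simpa using hb0), padicValRat.of_int,
    padicValRat.of_int] at hv
  exact (dvd_add_left (h_int hb0)).mp (hv ▸ h_int ha0)

variable {K : Type*} [Field K] [NumberField K] [Algebra K L]

theorem finrank_dvd_padicValRat_of_norm_eq_ratCast (hp : Prime (p : 𝓞 L)) {x : L} {q : ℚ}
    (hx : Algebra.norm K x = q) : (finrank K L : ℤ) ∣ padicValRat p q := by
  have hN : Algebra.norm ℚ x = q ^ finrank ℚ K := by
    rw [← Algebra.norm_norm (R := ℚ) (S := K), hx]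
    simpa using Algebra.norm_algebraMap (R := ℚ) (S := K) q
  have h := finrank_dvd_padicValRat_norm hp x
  rw [hN, padicValRat.pow, ← finrank_mul_finrank ℚ K L, Nat.cast_mul] at h
  exact Int.dvd_of_mul_dvd_mul_left (mod_cast finrank_pos.ne') h

theorem stmt18_general (hp : Prime (p : 𝓞 L)) (hKL : finrank K L ≠ 1) (x : L) :
    Algebra.norm K x ≠ p := by
  intro hx
  have h := finrank_dvd_padicValRat_of_norm_eq_ratCast (q := p) hp (by simpa using hx)
  rw [padicValRat.self (Fact.out : p.Prime).one_lt] at h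
  exact hKL (by exact_mod_cast Int.eq_one_of_dvd_one (Int.natCast_nonneg _) h)

end NumberField

theorem ne_one_of_apply_eq_pow {R A : Type*} [CommSemiring R] [CommSemiring A] [Algebra R A]
    {σ : A ≃ₐ[R] A} {ζ : A} {n k : ℕ} [NeZero n] (hζ : IsPrimitiveRoot ζ n)
    (hk : ¬ 1 ≡ k [MOD n]) (hσ : σ ζ = ζ ^ k) : σ ≠ 1 := by
  rintro rfl
  have hpow : ζ ^ 1 = ζ ^ k := by simpa using hσ
  exact hk (hζ.eq_orderOf ▸ (hζ.isOfFinOrder (NeZero.ne n)).pow_eq_pow_iff_modEq.mp hpow)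

theorem finrank_fixedField_zpowers_ne_one {F E : Type*} [Field F] [Field E] [Algebra F E]
    [FiniteDimensional F E] {σ : E ≃ₐ[F] E} (hσ : σ ≠ 1) :
    finrank (IntermediateField.fixedField (Subgroup.zpowers σ)) E ≠ 1 := by
  rwa [IntermediateField.finrank_fixedField_eq_card, Nat.card_zpowers, ne_eq, orderOf_eq_one_iff]

theorem orderOf_three_zmod_seven : orderOf ((3 : ℕ) : ZMod 7) = Nat.totient 7 := by
  rw [show Nat.totient 7 = 6 by decide, orderOf_eq_iff (by decide)]
  decide

theorem prime_three_ringOfIntegers_cyclotomicField_seven :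
    Prime ((3 : ℕ) : 𝓞 (CyclotomicField 7 ℚ)) := by
  -- Restated for the canonical `ℚ`-algebra structure of a characteristic-zero field, which is not
  -- syntactically the one that `CyclotomicField` carries.
  have : IsCyclotomicExtension {7} ℚ (CyclotomicField 7 ℚ) :=
    CyclotomicField.isCyclotomicExtension 7 ℚ
  exact prime_natCast_of_orderOf_eq_totient orderOf_three_zmod_seven

/-- let `L = ℚ(ζ₇)` be the 7th cyclotomic field, `σ` the `ℚ`-algebra
automorphism with `σ(ζ₇) = ζ₇²`, and `K` the fixed field of `⟨σ⟩` (so `K = ℚ(√−7)` and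
`L/K` is cyclic of degree 3). Then `3` is not a norm of `L/K`: `N_{L/K}(x) ≠ 3` for all
`x ∈ L`. Consequently the cyclic algebra `(L/K, σ, 3)` is a division algebra. -/
theorem stmt18 (ζ : CyclotomicField 7 ℚ) (hζ : IsPrimitiveRoot ζ 7)
    (σ : CyclotomicField 7 ℚ ≃ₐ[ℚ] CyclotomicField 7 ℚ) (hσ : σ ζ = ζ ^ 2) :
    ∀ x : CyclotomicField 7 ℚ,
      Algebra.norm (IntermediateField.fixedField (Subgroup.zpowers σ)) x ≠ 3 := by
  exact stmt18_general prime_three_ringOfIntegers_cyclotomicField_seven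
    (finrank_fixedField_zpowers_ne_one (ne_one_of_apply_eq_pow hζ (by decide) hσ))
end
end

section
/- Let L = ℚ(ζ₂₈) be the 28th cyclotomic field with ζ a primitive 28th root of unity (so L = ℚ(ζ₇, i) with i = ζ⁷), let σ be the ℚ-algebra automorphism of L determined by σ(ζ) = ζ⁹ (it fixes ζ⁷ and has order 3), and let K be the fixed field of the subgroup generated by σ (so K = ℚ(i, √7) and L/K is cyclic of degree 3). Then 1 + i is not a norm of the extension L/K: for every x ∈ L, the image of N_{L/K}(x) in L is different from 1 + ζ⁷. (Consequently the cyclic algebra (L/K, σ, 1+i) is a division algebra.) -/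
noncomputable section

/-! Let `P` be a prime of `L` above 7. It is totally ramified over `ℚ(i)`, so `Gal(L/ℚ(i))` acts
trivially on the residue field `𝓞 L ⧸ P`, which has 49 elements. Hence, when `K` contains `i`, a
norm from `L` to `K` that is integral reduces to an `[L : K]`-th power. If 3 divides `[L : K]` and
`1 + i` is a norm, then `1 + i` reduces to a cube in `𝔽₄₉`; it does not, because
`(1 + i) ^ 16 = 256 ≠ 1` in characteristic 7. -/

open NumberField

section Inertia

variable {R : Type*} [CommRing R] {P : Ideal R}

theorem mk_prod_smul_eq_pow_card {G : Type*} [Group G] [Fintype G] [MulSemiringAction G R]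
    (hG : P.toAddSubgroup.inertia G = ⊤) (a : R) :
    Ideal.Quotient.mk P (∏ g : G, g • a) = Ideal.Quotient.mk P a ^ Nat.card G := by
  have mk_smul (g : G) : Ideal.Quotient.mk P (g • a) = Ideal.Quotient.mk P a :=
    Ideal.Quotient.eq.2 <| AddSubgroup.mem_inertia.1 (hG ▸ Subgroup.mem_top g) a
  simp [mk_smul]

variable [IsDomain R]

theorem exists_eq_div_notMem_or_notMem (P : Ideal R) [P.IsPrime]
    [ValuationRing (Localization.AtPrime P)] {L : Type*} [Field L] [Algebra R L]
    [IsFractionRing R L] (x : L) :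
    ∃ a b : R, b ≠ 0 ∧ (a ∉ P ∨ b ∉ P) ∧ x = algebraMap R L a / algebraMap R L b := by
  obtain ⟨c, d, hd, rfl⟩ := IsFractionRing.div_surjective R x
  have hd0 : d ≠ 0 := nonZeroDivisors.ne_zero hd
  have clear_denom (r s : R) (t : Localization.AtPrime P)
      (h : algebraMap R _ r * t = algebraMap R _ s) : ∃ a, ∃ b ∉ P, b ≠ 0 ∧ r * a = s * b := by
    obtain ⟨a, b, rfl⟩ := IsLocalization.exists_mk'_eq P.primeCompl t
    refine ⟨a, b, b.2, fun hb ↦ b.2 (hb ▸ P.zero_mem), ?_⟩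
    apply IsLocalization.injective (Localization.AtPrime P) P.primeCompl_le_nonZeroDivisors
    rw [map_mul, map_mul, ← h, mul_assoc, IsLocalization.mk'_spec]
  obtain ⟨t, h | h⟩ := ValuationRing.cond (algebraMap R (Localization.AtPrime P) c)
    (algebraMap R (Localization.AtPrime P) d)
  · obtain ⟨a, b, hb, hb0, hab⟩ := clear_denom _ _ t h
    have ha0 : a ≠ 0 := fun ha ↦ mul_ne_zero hd0 hb0 (by rw [← hab, ha, mul_zero])
    refine ⟨b, a, ha0, .inl hb, ?_⟩
    rw [div_eq_div_iff (by simpa) (by simpa), ← map_mul, ← map_mul, hab, mul_comm]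
  · obtain ⟨a, b, hb, hb0, hab⟩ := clear_denom _ _ t h
    refine ⟨a, b, hb0, .inr hb, ?_⟩
    rw [div_eq_div_iff (by simpa) (by simpa), ← map_mul, ← map_mul, ← hab, mul_comm]

variable [P.IsMaximal] [ValuationRing (Localization.AtPrime P)]

theorem exists_pow_card_eq_mk_of_prod_smul_eq {G : Type*} [Group G] [Fintype G]
    [MulSemiringAction G R] {L : Type*} [Field L] [Algebra R L] [IsFractionRing R L]
    [MulSemiringAction G L] [SMulDistribClass G R L] (hG : P.toAddSubgroup.inertia G = ⊤)
    {u : R} {x : L} (hx : ∏ g : G, g • x = algebraMap R L u) :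
    ∃ y : R ⧸ P, y ^ Nat.card G = Ideal.Quotient.mk P u := by
  let _ := Ideal.Quotient.field P
  let π := Ideal.Quotient.mk P
  have hπ {r : R} : π r = 0 ↔ r ∈ P := Ideal.Quotient.eq_zero_iff_mem
  obtain ⟨a, b, hb0, hab, rfl⟩ := exists_eq_div_notMem_or_notMem P x
  have hprod : ∏ g : G, g • a = u * ∏ g : G, g • b := by
    apply IsFractionRing.injective R L
    have hbL : ∏ g : G, g • algebraMap R L b ≠ 0 :=
      Finset.prod_ne_zero_iff.2 fun g _ ↦ by simpa [smul_eq_zero_iff_eq] using hb0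
    simp only [smul_div₀', Finset.prod_div_distrib] at hx
    simpa only [map_mul, map_prod, algebraMap.smul'] using (div_eq_iff hbL).1 hx
  have hpow : π a ^ Nat.card G = π u * π b ^ Nat.card G := by
    simpa only [map_mul, mk_prod_smul_eq_pow_card hG] using
      congrArg (Ideal.Quotient.mk P) hprod
  have hπb : π b ≠ 0 := by
    intro hπb
    have hπa : π a = 0 := by
      rw [hπb, zero_pow Nat.card_pos.ne', mul_zero] at hpow
      exact eq_zero_of_pow_eq_zero hpow
    exact hab.elim (· (hπ.1 hπa)) (· (hπ.1 hπb))
  exact ⟨π a / π b, by rw [div_pow, hpow, mul_div_cancel_right₀ _ (pow_ne_zero _ hπb)]⟩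

theorem exists_pow_finrank_eq_mk_of_norm_eq {K L : Type*} [Field K] [Field L] [Algebra K L]
    [FiniteDimensional K L] [IsGalois K L] [Algebra R L] [IsFractionRing R L]
    [MulSemiringAction Gal(L/K) R] [SMulDistribClass Gal(L/K) R L]
    (hG : P.toAddSubgroup.inertia Gal(L/K) = ⊤) {u : R} {x : L}
    (hx : algebraMap K L (Algebra.norm K x) = algebraMap R L u) :
    ∃ y : R ⧸ P, y ^ Module.finrank K L = Ideal.Quotient.mk P u := by
  rw [← IsGalois.card_aut_eq_finrank]
  refine exists_pow_card_eq_mk_of_prod_smul_eq hG (x := x) ?_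
  rw [← hx, Algebra.norm_eq_prod_automorphisms]
  rfl

end Inertia

theorem exists_isMaximal_charP_quotient (R : Type*) [CommRing R] [CharZero R]
    [Algebra.IsIntegral ℤ R] (p : ℕ) [Fact p.Prime] :
    ∃ P : Ideal R, P.IsMaximal ∧ CharP (R ⧸ P) p := by
  have hp : (Ideal.span {(p : ℤ)}).IsMaximal := Int.ideal_span_isMaximal_of_prime p
  obtain ⟨P, hP, hPp⟩ :=
    Ideal.exists_maximal_ideal_liesOver_of_isIntegral (S := R) (Ideal.span {(p : ℤ)})
  refine ⟨P, hP, (CharP.charP_iff_prime_eq_zero Fact.out).2 ?_⟩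
  have hpP : algebraMap ℤ R p ∈ P :=
    (Ideal.mem_of_liesOver P _ _).1 (Ideal.mem_span_singleton_self (p : ℤ))
  simpa using Ideal.Quotient.eq_zero_iff_mem.2 hpP

section Cyclotomic

variable {n : ℕ} [NeZero n] {L : Type*} [Field L] [CharZero L] [IsCyclotomicExtension {n} ℚ L]
  {ζ : L} (hζ : IsPrimitiveRoot ζ n) (p : ℕ)

include hζ

theorem ringHom_eq_of_toInteger_pow_eq {A : Type*} [CommRing A] [IsReduced A] [ExpChar A p]
    {a : ℕ} {φ ψ : 𝓞 L →+* A} (h : φ hζ.toInteger ^ p ^ a = ψ hζ.toInteger ^ p ^ a) : φ = ψ := by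
  have hgen : φ hζ.toInteger = ψ hζ.toInteger := iterateFrobenius_inj A p a h
  have halg : φ.toIntAlgHom = ψ.toIntAlgHom :=
    hζ.integralPowerBasis.algHom_ext (by simpa using hgen)
  exact RingHom.ext fun z ↦ DFunLike.congr_fun halg z

variable (P : Ideal (𝓞 L)) [P.IsPrime] [ExpChar (𝓞 L ⧸ P) p]

theorem mem_inertia_of_smul_toInteger_pow_eq {G : Type*} [Group G] [MulSemiringAction G (𝓞 L)]
    {a : ℕ} {g : G} (hg : g • hζ.toInteger ^ p ^ a = hζ.toInteger ^ p ^ a) :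
    g ∈ P.toAddSubgroup.inertia G := by
  let π := Ideal.Quotient.mk P
  have hπ : π.comp (MulSemiringAction.toRingHom G (𝓞 L) g) = π :=
    ringHom_eq_of_toInteger_pow_eq hζ p (a := a) <| by
      simpa [smul_pow'] using congrArg π hg
  exact fun z ↦ Ideal.Quotient.eq.1 (DFunLike.congr_fun hπ z)

theorem inertia_eq_top_of_pow_mem {K : IntermediateField ℚ L} {a : ℕ}
    (ha : ζ ^ p ^ a ∈ K) : P.toAddSubgroup.inertia Gal(L/K) = ⊤ :=
  (Subgroup.eq_top_iff' _).2 fun g ↦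
    mem_inertia_of_smul_toInteger_pow_eq hζ p P (RingOfIntegers.ext (g.commutes ⟨ζ ^ p ^ a, ha⟩))

theorem quotient_pow_eq_self {a f : ℕ} (hf : ζ ^ (p ^ a * p ^ f) = ζ ^ p ^ a) (y : 𝓞 L ⧸ P) :
    y ^ p ^ f = y := by
  let π := Ideal.Quotient.mk P
  have hint : hζ.toInteger ^ (p ^ f * p ^ a) = hζ.toInteger ^ p ^ a :=
    RingOfIntegers.ext ((congrArg (ζ ^ ·) (mul_comm _ _)).trans hf)
  have hπ : (iterateFrobenius (𝓞 L ⧸ P) p f).comp π = π :=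
    ringHom_eq_of_toInteger_pow_eq hζ p (a := a) <| by
      simpa [iterateFrobenius_def, ← pow_mul] using congrArg π hint
  obtain ⟨z, rfl⟩ := Ideal.Quotient.mk_surjective y
  exact DFunLike.congr_fun hπ z

end Cyclotomic

theorem pow_three_ne_one_add_of_pow_eq_self {k : Type*} [CommRing k] [CharP k 7] {i y : k}
    (hi : i ^ 2 = -1) (hy : y ^ 7 ^ 2 = y) : y ^ 3 ≠ 1 + i := by
  intro hcube
  have h16 : (1 + i) ^ 16 = 256 := by
    have h2 : (1 + i) ^ 2 = 2 * i := by linear_combination hi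
    calc (1 + i) ^ 16 = ((1 + i) ^ 2) ^ 8 := by ring
      _ = 256 * (i ^ 2) ^ 4 := by rw [h2]; ring
      _ = 256 := by rw [hi]; ring
  have h255 : 255 * y = 0 := by
    have hy16 : (y ^ 3) ^ 16 = 256 := by rw [hcube, h16]
    linear_combination hy - y * hy16
  have h510 : ((510 : ℕ) : k) = 0 := by
    push_cast
    linear_combination y ^ 2 * (1 - i) * h255 - 255 * (1 - i) * hcube + 255 * hi
  exact absurd ((CharP.cast_eq_zero_iff k 7 510).1 h510) (by norm_num)

theorem pow_three_ne_mk_one_add_toInteger_pow_seven {L : Type*} [Field L] [CharZero L]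
    [IsCyclotomicExtension {28} ℚ L] {ζ : L} (hζ : IsPrimitiveRoot ζ 28) (P : Ideal (𝓞 L))
    [P.IsPrime] [CharP (𝓞 L ⧸ P) 7] (y : 𝓞 L ⧸ P) :
    y ^ 3 ≠ Ideal.Quotient.mk P (1 + hζ.toInteger ^ 7) := by
  have : Fact (Nat.Prime 7) := ⟨by norm_num⟩
  have hpow : ζ ^ (7 ^ 1 * 7 ^ 2) = ζ ^ 7 ^ 1 := pow_eq_pow_of_modEq (n := 28) rfl hζ.pow_eq_one
  have hfrob : y ^ 7 ^ 2 = y := quotient_pow_eq_self hζ 7 P hpow y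
  have hsq : (hζ.toInteger ^ 7) ^ 2 = -1 := by
    rw [← pow_mul]
    exact (hζ.toInteger_isPrimitiveRoot.pow (a := 14) (by norm_num)
      (by norm_num)).eq_neg_one_of_two_right
  have hmk : Ideal.Quotient.mk P (hζ.toInteger ^ 7) ^ 2 = -1 := by
    rw [← map_pow, hsq, map_neg, map_one]
  rw [map_add, map_one]
  exact pow_three_ne_one_add_of_pow_eq_self hmk hfrob

theorem pow_mem_fixedField_zpowers {F L : Type*} [Field F] [Field L] [Algebra F L] {σ : Gal(L/F)}
    {ζ : L} {n k m : ℕ} (hζ : ζ ^ n = 1) (hσ : σ ζ = ζ ^ k) (hm : k * m ≡ m [MOD n]) :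
    ζ ^ m ∈ IntermediateField.fixedField (Subgroup.zpowers σ) := by
  have hfix : σ (ζ ^ m) = ζ ^ m := by
    rw [map_pow, hσ, ← pow_mul, pow_eq_pow_of_modEq hm hζ]
  rw [IntermediateField.mem_fixedField_iff, Subgroup.forall_mem_zpowers]
  exact fun j ↦ MulAction.mem_fixedBy_zpow (g := σ) hfix j

theorem orderOf_eq_orderOf_zmod {n : ℕ} [NeZero n] {F L : Type*} [Field F] [CommRing L]
    [IsDomain L] [Algebra F L] [IsCyclotomicExtension {n} F L] {ζ : L} (hζ : IsPrimitiveRoot ζ n)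
    {k : ℕ} {σ : L ≃ₐ[F] L} (hσ : σ ζ = ζ ^ k) : orderOf σ = orderOf (k : ZMod n) := by
  have hpow : ζ ^ (hζ.autToPow F σ : ZMod n).val = ζ ^ k := (hζ.autToPow_spec F σ).trans hσ
  have hk : (hζ.autToPow F σ : ZMod n) = k := by
    rw [← ZMod.natCast_zmod_val (hζ.autToPow F σ : ZMod n)]
    refine (ZMod.natCast_eq_natCast_iff _ _ _).2 ?_
    simpa only [← hζ.eq_orderOf] using
      (hζ.isOfFinOrder (NeZero.ne n)).pow_eq_pow_iff_modEq.1 hpow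
  rw [← hk, orderOf_units, orderOf_injective _ (hζ.autToPow_injective F)]

theorem finrank_fixedField_zpowers {n : ℕ} [NeZero n] {F L : Type*} [Field F] [Field L]
    [Algebra F L] [IsCyclotomicExtension {n} F L] {ζ : L} (hζ : IsPrimitiveRoot ζ n) {k : ℕ}
    {σ : Gal(L/F)} (hσ : σ ζ = ζ ^ k) :
    Module.finrank (IntermediateField.fixedField (Subgroup.zpowers σ)) L =
      orderOf (k : ZMod n) := by
  have : FiniteDimensional F L := IsCyclotomicExtension.finiteDimensional {n} F L
  rw [IntermediateField.finrank_fixedField_eq_card, Nat.card_zpowers,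
    orderOf_eq_orderOf_zmod hζ hσ]

theorem orderOf_nine_zmod : orderOf ((9 : ℕ) : ZMod 28) = 3 := by
  have : Fact (Nat.Prime 3) := ⟨Nat.prime_three⟩
  exact orderOf_eq_prime (by decide) (by decide)

theorem stmt19_general {L : Type*} [Field L] [CharZero L] [IsCyclotomicExtension {28} ℚ L]
    {ζ : L} (hζ : IsPrimitiveRoot ζ 28) {K : IntermediateField ℚ L} (hi : ζ ^ 7 ∈ K)
    (h3 : 3 ∣ Module.finrank K L) (x : L) :
    algebraMap K L (Algebra.norm K x) ≠ 1 + ζ ^ 7 := by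
  have : NumberField L := IsCyclotomicExtension.numberField {28} ℚ L
  have : IsGalois ℚ L := IsCyclotomicExtension.isGalois {28} ℚ L
  have : Fact (Nat.Prime 7) := ⟨by norm_num⟩
  obtain ⟨P, _, _⟩ := exists_isMaximal_charP_quotient (𝓞 L) 7
  have hP : P ≠ ⊥ := by
    rintro rfl
    simpa using Ideal.natCast_mem_of_charP_quotient 7 (⊥ : Ideal (𝓞 L))
  have := IsLocalization.AtPrime.isDiscreteValuationRing_of_dedekind_domain
    (𝓞 L) hP (Localization.AtPrime P)
  have hcube := pow_three_ne_mk_one_add_toInteger_pow_seven hζ P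
  have hinertia : P.toAddSubgroup.inertia Gal(L/K) = ⊤ :=
    inertia_eq_top_of_pow_mem hζ 7 P (a := 1) hi
  intro hx
  obtain ⟨y, hy⟩ := exists_pow_finrank_eq_mk_of_norm_eq hinertia
    (u := 1 + hζ.toInteger ^ 7) (x := x) hx
  obtain ⟨m, hm⟩ := h3
  exact hcube (y ^ m) (by rw [← pow_mul', ← hm, hy])

/-- let `L = ℚ(ζ₂₈)` be the 28th cyclotomic field with `ζ` a primitive
28th root of unity (so `L = ℚ(ζ₇, i)` with `i = ζ⁷`), let `σ` be the `ℚ`-algebra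
automorphism with `σ(ζ) = ζ⁹`, and let `K` be the fixed field of `⟨σ⟩` (so
`K = ℚ(i, √7)` and `L/K` is cyclic of degree 3). Then `1 + i` is not a norm of `L/K`:
the image in `L` of `N_{L/K}(x)` differs from `1 + ζ⁷` for all `x ∈ L`. Consequently
the cyclic algebra `(L/K, σ, 1 + i)` is a division algebra. -/
theorem stmt19 (ζ : CyclotomicField 28 ℚ) (hζ : IsPrimitiveRoot ζ 28)
    (σ : CyclotomicField 28 ℚ ≃ₐ[ℚ] CyclotomicField 28 ℚ) (hσ : σ ζ = ζ ^ 9) :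
    ∀ x : CyclotomicField 28 ℚ,
      algebraMap (IntermediateField.fixedField (Subgroup.zpowers σ)) (CyclotomicField 28 ℚ)
        (Algebra.norm (IntermediateField.fixedField (Subgroup.zpowers σ)) x) ≠ 1 + ζ ^ 7 := by
  have : IsCyclotomicExtension {28} ℚ (CyclotomicField 28 ℚ) :=
    CyclotomicField.isCyclotomicExtension 28 ℚ
  exact stmt19_general hζ (pow_mem_fixedField_zpowers hζ.pow_eq_one hσ rfl)
    ((finrank_fixedField_zpowers hζ hσ).trans orderOf_nine_zmod).symm.dvd
end
end
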